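/- arXiv:2305.09966 — 2 statements merged into one kernel-verified Lean document; each statement's English description precedes it below -/
import Mathlib

section
/- Let A be an AWA and let B_u be the NBA constructed from A via families of total preorders (the B_u construction). Then (1) L(B_u) = L(A), and (2) B_u is unambiguous, i.e., B_u has at most one accepting macrorun over every ω-word. -/
/-!
Fix a word `w`. The membership problem for a weak alternating automaton is a determined game, and
it is convenient to describe its winning region by families `P i ⊆ Q` (`ABA.Winning`): every
transition formula at a state of `P i` is satisfied by `P (i + 1)`, and inside a rejecting SCC `C`
every state has a finite *rank*, the number of steps within which the branches can be forced to
leave `C` (`ABA.layer`). The largest such family `M.win w` consists of the states accepting the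
suffixes of `w` (`ABA.mem_lang_iff`), the largest family of the dual automaton is its complement
(`ABA.dual_win`), and a family that is winning for `M` and whose complement is winning for the dual
must therefore be `M.win w` (`ABA.Winning.eq_win`).

In the construction, each SCC `C` is rejecting for exactly one of `M` and its dual, so that both
kinds of SCCs can be treated alike (`ABA.sideAut`, `ABA.sideSet`). The rule for the preorders
propagates backwards: if `⪯'_C` is the order by rank on a downwards closed set `D'` of states of
bounded rank, then `⪯_C` is the order by rank on each downwards closed set supported by `D'`
(`ABA.rule_iff`, `ABA.Agrees.step`). In an accepting macrorun the tracked set `D` becomes empty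
again and again, where nothing has to be checked. Going back from there, when `C` is selected, `D`
is the whole relevant part of `C`, so at that time all ranks are finite and `⪯_C` is the rank order;
as every `C` is selected again and again, this holds at all positions (`agrees_all`).
Hence the first component is `M.win w` and the preorders are the rank orders; the remaining two
components evolve deterministically. This gives unambiguity and `L(B_u) ⊆ L(A)`.

Conversely, `M.win w` with the rank orders satisfies all rules (`ABA.rankLe_rule`), and the bound on
the ranks in `D` decreases by one in each step until `D` is empty (`exists_empty`), so the resulting
macrorun is accepting.
-/

universe u v

/-- Positive Boolean formulas over `Q` (with constants tt and ff, connectives ∧ and ∨). -/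
inductive PosBool (Q : Type u) : Type u
  | tt : PosBool Q
  | ff : PosBool Q
  | var : Q → PosBool Q
  | band : PosBool Q → PosBool Q → PosBool Q
  | bor : PosBool Q → PosBool Q → PosBool Q

namespace PosBool

variable {Q : Type u}

/-- A set `Y` satisfies a positive Boolean formula. -/
def Sat (Y : Set Q) : PosBool Q → Prop
  | .tt => True
  | .ff => False
  | .var q => q ∈ Y
  | .band θ₁ θ₂ => Sat Y θ₁ ∧ Sat Y θ₂
  | .bor θ₁ θ₂ => Sat Y θ₁ ∨ Sat Y θ₂

/-- The states occurring in a formula. -/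
def vars : PosBool Q → Set Q
  | .tt => ∅
  | .ff => ∅
  | .var q => {q}
  | .band θ₁ θ₂ => vars θ₁ ∪ vars θ₂
  | .bor θ₁ θ₂ => vars θ₁ ∪ vars θ₂

/-- The dual formula: exchange tt with ff and ∧ with ∨. -/
def dual : PosBool Q → PosBool Q
  | .tt => .ff
  | .ff => .tt
  | .var q => .var q
  | .band θ₁ θ₂ => .bor (dual θ₁) (dual θ₂)
  | .bor θ₁ θ₂ => .band (dual θ₁) (dual θ₂)

end PosBool

/-- An alternating Büchi automaton with alphabet `α` and state space `Q`. -/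
structure ABA (α : Type v) (Q : Type u) where
  init : Q
  delta : Q → α → PosBool Q
  acc : Set Q

namespace ABA

variable {α : Type v} {Q : Type u}

/-- The automaton `A^q`, i.e. `A` with initial state `q`. -/
def setInit (M : ABA α Q) (q : Q) : ABA α Q := { M with init := q }

/-- Completeness: every transition formula is satisfiable. -/
def Complete (M : ABA α Q) : Prop := ∀ q a, PosBool.Sat (Set.univ : Set Q) (M.delta q a)

/-- Edge of the underlying graph. -/
def edge (M : ABA α Q) (q q' : Q) : Prop := ∃ a, q' ∈ PosBool.vars (M.delta q a)

/-- Reachability in the underlying graph. -/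
def reach (M : ABA α Q) : Q → Q → Prop := Relation.ReflTransGen M.edge

/-- The strongly connected component of a state. -/
def sccOf (M : ABA α Q) (q : Q) : Set Q := {q' | M.reach q q' ∧ M.reach q' q}

/-- `C` is an SCC of the underlying graph. -/
def IsSCC (M : ABA α Q) (C : Set Q) : Prop := ∃ q, C = M.sccOf q

/-- A weak alternating automaton: every SCC is accepting or rejecting. -/
def IsWeak (M : ABA α Q) : Prop := ∀ q : Q, M.sccOf q ⊆ M.acc ∨ M.sccOf q ∩ M.acc = ∅

/-- The dual automaton. -/
def dual (M : ABA α Q) : ABA α Q where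
  init := M.init
  delta := fun q a => (M.delta q a).dual
  acc := M.accᶜ

/-- A run DAG of `M` over the ω-word `w`. -/
structure RunDAG (M : ABA α Q) (w : ℕ → α) where
  V : ℕ → Set Q
  E : ℕ → Q → Q → Prop
  init_mem : M.init ∈ V 0
  edge_src : ∀ ℓ q q', E ℓ q q' → q ∈ V ℓ
  edge_tgt : ∀ ℓ q q', E ℓ q q' → q' ∈ V (ℓ + 1)
  sat : ∀ ℓ q, q ∈ V ℓ → PosBool.Sat {q' | E ℓ q q'} (M.delta q (w ℓ))

/-- An ω-branch of a run DAG. -/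
def RunDAG.IsBranch {M : ABA α Q} {w : ℕ → α} (G : M.RunDAG w) (b : ℕ → Q) : Prop :=
  b 0 = M.init ∧ ∀ ℓ, G.E ℓ (b ℓ) (b (ℓ + 1))

/-- A run DAG is accepting if every ω-branch visits accepting states infinitely often. -/
def RunDAG.Accepting {M : ABA α Q} {w : ℕ → α} (G : M.RunDAG w) : Prop :=
  ∀ b, G.IsBranch b → ∀ n, ∃ m, n ≤ m ∧ b m ∈ M.acc

/-- `M` accepts `w` if there is an accepting run DAG of `M` over `w`. -/
def Accepts (M : ABA α Q) (w : ℕ → α) : Prop := ∃ G : M.RunDAG w, G.Accepting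

/-- The language of `M`. -/
def lang (M : ABA α Q) : Set (ℕ → α) := {w | M.Accepts w}

/-- `R`: the union of the rejecting SCCs. -/
def RejPart (M : ABA α Q) : Set Q := {q | M.sccOf q ∩ M.acc = ∅}

/-- `Acc`: the union of the accepting SCCs. -/
def AccPart (M : ABA α Q) : Set Q := {q | M.sccOf q ⊆ M.acc}

end ABA

/-- The suffix `w[i⋯]` of an ω-word. -/
def suffix {α : Type v} (w : ℕ → α) (i : ℕ) : ℕ → α := fun n => w (i + n)

/-- `Q_w = {s ∈ Q | w ∈ L(A^s)}`. -/
def QSet {α : Type v} {Q : Type u} (M : ABA α Q) (w : ℕ → α) : Set Q :=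
  {s | w ∈ (M.setInit s).lang}

/-- The unique sequence `R_w`, i.e. `i ↦ Q_{w[i⋯]}`. -/
def QSeq {α : Type v} {Q : Type u} (M : ABA α Q) (w : ℕ → α) (i : ℕ) : Set Q :=
  QSet M (suffix w i)

/-- A nondeterministic Büchi automaton. -/
structure NBA (α : Type v) (P : Type u) where
  init : Set P
  delta : P → α → Set P
  acc : Set P

namespace NBA

variable {α : Type v} {P : Type u}

/-- A macrorun of `N` over `w`. -/
def IsMacrorun (N : NBA α P) (w : ℕ → α) (ρ : ℕ → P) : Prop :=
  ρ 0 ∈ N.init ∧ ∀ i, ρ (i + 1) ∈ N.delta (ρ i) (w i)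

/-- An accepting macrorun of `N` over `w`. -/
def IsAccMacrorun (N : NBA α P) (w : ℕ → α) (ρ : ℕ → P) : Prop :=
  N.IsMacrorun w ρ ∧ ∀ n, ∃ m, n ≤ m ∧ ρ m ∈ N.acc

/-- The language of an NBA. -/
def lang (N : NBA α P) : Set (ℕ → α) := {w | ∃ ρ, N.IsAccMacrorun w ρ}

/-- `N^m`: the NBA `N` with set of initial states `{m}`. -/
def fromState (N : NBA α P) (p : P) : NBA α P := { N with init := {p} }

/-- An NBA is unambiguous if it has at most one accepting macrorun over every word. -/
def Unambiguous (N : NBA α P) : Prop :=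
  ∀ w ρ₁ ρ₂, N.IsAccMacrorun w ρ₁ → N.IsAccMacrorun w ρ₂ → ρ₁ = ρ₂

end NBA

/-- Macrostates of the Bustan–Rubin–Vardi construction: tuples `(Q₁, Q₂, Q₃, Q₄)`. -/
abbrev BRVState (Q : Type u) := Set Q × Set Q × Set Q × Set Q

/-- Consistency of a BRV tuple: `Q₂ = Q∖Q₁`, `Q₃ ⊆ Q₁∖F`, `Q₄ ⊆ Q₂∖F̂`. -/
def BRVConsistent {α : Type v} {Q : Type u} (M : ABA α Q) (m : BRVState Q) : Prop :=
  m.2.1 = m.1ᶜ ∧ m.2.2.1 ⊆ m.1 \ M.acc ∧ m.2.2.2 ⊆ m.2.1 \ M.dual.acc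

/-- The Bustan–Rubin–Vardi NBA `B` constructed from an AWA. -/
def BRV {α : Type v} {Q : Type u} (M : ABA α Q) : NBA α (BRVState Q) where
  init := {m | BRVConsistent M m ∧ M.init ∈ m.1}
  delta := fun m σ =>
    {m' | BRVConsistent M m ∧ BRVConsistent M m' ∧
      (∀ s ∈ m.1, PosBool.Sat m'.1 (M.delta s σ)) ∧
      (∀ s ∈ m.2.1, PosBool.Sat m'.2.1 (M.dual.delta s σ)) ∧
      ((m.2.2.1 = ∅ ∧ m.2.2.2 = ∅ ∧ m'.2.2.1 = m'.1 \ M.acc ∧ m'.2.2.2 = m'.2.1 \ M.dual.acc) ∨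
       ((m.2.2.1 ≠ ∅ ∨ m.2.2.2 ≠ ∅) ∧
        (∃ Y₃ ⊆ m'.1, (∀ s ∈ m.2.2.1, PosBool.Sat Y₃ (M.delta s σ)) ∧ m'.2.2.1 = Y₃ \ M.acc) ∧
        (∃ Y₄ ⊆ m'.2.1, (∀ s ∈ m.2.2.2, PosBool.Sat Y₄ (M.dual.delta s σ)) ∧
          m'.2.2.2 = Y₄ \ M.dual.acc)))}
  acc := {m | BRVConsistent M m ∧ m.2.2.1 = ∅ ∧ m.2.2.2 = ∅}

/-- The domain of the distance function at level `i`: `(Q₁ⁱ ∩ R) ∪ (Acc ∖ Q₁ⁱ)`. -/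
def DistDom {α : Type v} {Q : Type u} (M : ABA α Q) (QS : ℕ → Set Q) (i : ℕ) : Set Q :=
  (QS i ∩ M.RejPart) ∪ (M.AccPart \ QS i)

/-- Consistency of a sequence of distance functions (Rules R1 and R2). -/
def ConsistentDist {α : Type v} {Q : Type u} (M : ABA α Q) (w : ℕ → α)
    (QS : ℕ → Set Q) (d : ℕ → Q → ℕ) : Prop :=
  ∀ i : ℕ,
    (∀ p ∈ M.RejPart ∩ QS i,
      PosBool.Sat ((QS (i + 1) \ M.sccOf p) ∪
        {q | q ∈ M.sccOf p ∩ QS (i + 1) ∧ d (i + 1) q ≤ d i p - 1}) (M.delta p (w i)) ∧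
      (1 < d i p →
        ¬ PosBool.Sat ((QS (i + 1) \ M.sccOf p) ∪
          {q | q ∈ M.sccOf p ∩ QS (i + 1) ∧ d (i + 1) q ≤ d i p - 2}) (M.delta p (w i)))) ∧
    (∀ p ∈ M.AccPart \ QS i,
      PosBool.Sat ((QS (i + 1) ∪ M.sccOf p)ᶜ ∪
        {q | q ∈ M.sccOf p \ QS (i + 1) ∧ d (i + 1) q ≤ d i p - 1}) (M.dual.delta p (w i)) ∧
      (1 < d i p →
        ¬ PosBool.Sat ((QS (i + 1) ∪ M.sccOf p)ᶜ ∪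
          {q | q ∈ M.sccOf p \ QS (i + 1) ∧ d (i + 1) q ≤ d i p - 2}) (M.dual.delta p (w i))))

/-- Strict part of a preorder. -/
def StrictOf {Q : Type u} (le : Q → Q → Prop) (p q : Q) : Prop := le p q ∧ ¬ le q p

/-- `le` is a total preorder on `D` (as a relation over `D × D`). -/
def IsTotalPreorderOn {Q : Type u} (D : Set Q) (le : Q → Q → Prop) : Prop :=
  (∀ p q, le p q → p ∈ D ∧ q ∈ D) ∧ (∀ p ∈ D, le p p) ∧
  (∀ p q r, le p q → le q r → le p r) ∧ (∀ p ∈ D, ∀ q ∈ D, le p q ∨ le q p)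

/-- `D` is downwards closed w.r.t. `le` inside the domain `Dom`. -/
def DownClosed {Q : Type u} (le : Q → Q → Prop) (Dom D : Set Q) : Prop :=
  D ⊆ Dom ∧ ∀ q ∈ D, ∀ q', le q' q → q' ∈ D

/-- The set of maximal elements of a preorder on the domain `Dom`. -/
def MaxSet {Q : Type u} (le : Q → Q → Prop) (Dom : Set Q) : Set Q :=
  {q | q ∈ Dom ∧ ∀ q' ∈ Dom, ¬ StrictOf le q q'}

/-- Rule R1' for a rejecting SCC `C`, letter `σ`, sets `Q₁, Q₁'` and preorders `le, le'`. -/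
def RuleR1 {α : Type v} {Q : Type u} (M : ABA α Q) (C : Set Q) (σ : α)
    (Q1 Q1' : Set Q) (le le' : Q → Q → Prop) : Prop :=
  ∀ q ∈ C ∩ Q1, ∀ q' ∈ C ∩ Q1,
    (StrictOf le q q' ↔ ∃ r ∈ C ∩ Q1',
      PosBool.Sat ({r' | r' ∈ C ∩ Q1' ∧ StrictOf le' r' r} ∪ (Q1' \ C)) (M.delta q σ) ∧
      ¬ PosBool.Sat ({r' | r' ∈ C ∩ Q1' ∧ StrictOf le' r' r} ∪ (Q1' \ C)) (M.delta q' σ))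

/-- Rule R2' for an accepting SCC `C`, letter `σ`, sets `Q₁, Q₁'` and preorders `le, le'`. -/
def RuleR2 {α : Type v} {Q : Type u} (M : ABA α Q) (C : Set Q) (σ : α)
    (Q1 Q1' : Set Q) (le le' : Q → Q → Prop) : Prop :=
  ∀ q ∈ C \ Q1, ∀ q' ∈ C \ Q1,
    (StrictOf le q q' ↔ ∃ r ∈ C \ Q1',
      PosBool.Sat ({r' | r' ∈ C \ Q1' ∧ StrictOf le' r' r} ∪ (Q1' ∪ C)ᶜ) (M.dual.delta q σ) ∧
      ¬ PosBool.Sat ({r' | r' ∈ C \ Q1' ∧ StrictOf le' r' r} ∪ (Q1' ∪ C)ᶜ) (M.dual.delta q' σ))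

/-- Consistency of a sequence of families of total preorders (Rules R1' and R2'). -/
def ConsistentPre {α : Type v} {Q : Type u} (M : ABA α Q) (w : ℕ → α)
    (QS : ℕ → Set Q) (pre : ℕ → Set Q → Q → Q → Prop) : Prop :=
  ∀ i C, M.IsSCC C →
    (C ⊆ M.RejPart →
      IsTotalPreorderOn (C ∩ QS i) (pre i C) ∧
      RuleR1 M C (w i) (QS i) (QS (i + 1)) (pre i C) (pre (i + 1) C)) ∧
    (C ⊆ M.AccPart →
      IsTotalPreorderOn (C \ QS i) (pre i C) ∧
      RuleR2 M C (w i) (QS i) (QS (i + 1)) (pre i C) (pre (i + 1) C))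

/-- Macrostates of the `B_u` construction: `(Q₁, Q₂, {⪯_C}_{C∈S}, S, D)`. -/
abbrev BuState (Q : Type u) := Set Q × Set Q × (Set Q → Q → Q → Prop) × Set Q × Set Q

def BuState.q1 {Q : Type u} (m : BuState Q) : Set Q := m.1
def BuState.q2 {Q : Type u} (m : BuState Q) : Set Q := m.2.1
def BuState.pre {Q : Type u} (m : BuState Q) : Set Q → Q → Q → Prop := m.2.2.1
def BuState.sS {Q : Type u} (m : BuState Q) : Set Q := m.2.2.2.1
def BuState.dD {Q : Type u} (m : BuState Q) : Set Q := m.2.2.2.2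

/-- Well-formedness of a `B_u` macrostate. -/
def BuWF {α : Type v} {Q : Type u} (M : ABA α Q) (m : BuState Q) : Prop :=
  m.q2 = m.q1ᶜ ∧
  (∀ C, M.IsSCC C →
    (C ⊆ M.RejPart → IsTotalPreorderOn (m.q1 ∩ C) (m.pre C)) ∧
    (C ⊆ M.AccPart → IsTotalPreorderOn (m.q2 ∩ C) (m.pre C))) ∧
  (∀ C, ¬ M.IsSCC C → m.pre C = fun _ _ => False) ∧
  M.IsSCC m.sS ∧
  (m.sS ⊆ M.RejPart → DownClosed (m.pre m.sS) (m.q1 ∩ m.sS) m.dD) ∧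
  (m.sS ⊆ M.AccPart → DownClosed (m.pre m.sS) (m.q2 ∩ m.sS) m.dD)

/-- The NBA `B_u` constructed from an AWA `M`, a round-robin successor `next` on SCCs
and an initial SCC `C₀`. -/
def Bu {α : Type v} {Q : Type u} (M : ABA α Q) (next : Set Q → Set Q) (C0 : Set Q) :
    NBA α (BuState Q) where
  init := {m | BuWF M m ∧ M.init ∈ m.q1 ∧ m.sS = C0 ∧ m.dD = ∅}
  delta := fun m σ =>
    {m' | BuWF M m ∧ BuWF M m' ∧
      (∀ s ∈ m.q1, PosBool.Sat m'.q1 (M.delta s σ)) ∧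
      (∀ s ∈ m.q2, PosBool.Sat m'.q2 (M.dual.delta s σ)) ∧
      (∀ C, M.IsSCC C →
        (C ⊆ M.RejPart → RuleR1 M C σ m.q1 m'.q1 (m.pre C) (m'.pre C)) ∧
        (C ⊆ M.AccPart → RuleR2 M C σ m.q1 m'.q1 (m.pre C) (m'.pre C))) ∧
      (m.dD = ∅ → m'.sS = next m.sS ∧
        (m'.sS ⊆ M.RejPart → m'.dD = m'.q1 ∩ m'.sS) ∧
        (m'.sS ⊆ M.AccPart → m'.dD = m'.q2 ∩ m'.sS)) ∧
      (m.dD ≠ ∅ → m'.sS = m.sS ∧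
        (m.sS ⊆ M.RejPart →
          (∀ s ∈ m.dD, PosBool.Sat (m'.dD ∪ (m'.q1 \ m.sS)) (M.delta s σ)) ∧
          (∀ D'', DownClosed (m'.pre m.sS) (m'.q1 ∩ m.sS) D'' →
            (∀ s ∈ m.dD, PosBool.Sat (D'' ∪ (m'.q1 \ m.sS)) (M.delta s σ)) → m'.dD ⊆ D'')) ∧
        (m.sS ⊆ M.AccPart →
          (∀ s ∈ m.dD, PosBool.Sat (m'.dD ∪ (m'.q2 \ m.sS)) (M.dual.delta s σ)) ∧
          (∀ D'', DownClosed (m'.pre m.sS) (m'.q2 ∩ m.sS) D'' →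
            (∀ s ∈ m.dD, PosBool.Sat (D'' ∪ (m'.q2 \ m.sS)) (M.dual.delta s σ)) → m'.dD ⊆ D'')))}
  acc := {m | BuWF M m ∧ m.dD = ∅}

/-- Macrostates of the `U` construction: `(Q₁, Q₂, ⪯_C, C, D)`. -/
abbrev UState (Q : Type u) := Set Q × Set Q × (Q → Q → Prop) × Set Q × Set Q

def UState.q1 {Q : Type u} (m : UState Q) : Set Q := m.1
def UState.q2 {Q : Type u} (m : UState Q) : Set Q := m.2.1
def UState.pre {Q : Type u} (m : UState Q) : Q → Q → Prop := m.2.2.1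
def UState.cC {Q : Type u} (m : UState Q) : Set Q := m.2.2.2.1
def UState.dD {Q : Type u} (m : UState Q) : Set Q := m.2.2.2.2

/-- Well-formedness of a `U` macrostate. -/
def UWF {α : Type v} {Q : Type u} (M : ABA α Q) (m : UState Q) : Prop :=
  m.q2 = m.q1ᶜ ∧ M.IsSCC m.cC ∧
  (m.cC ⊆ M.RejPart →
    IsTotalPreorderOn (m.q1 ∩ m.cC) m.pre ∧
    (m.dD = m.q1 ∩ m.cC ∨ m.dD = (m.q1 ∩ m.cC) \ MaxSet m.pre (m.q1 ∩ m.cC))) ∧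
  (m.cC ⊆ M.AccPart →
    IsTotalPreorderOn (m.q2 ∩ m.cC) m.pre ∧
    (m.dD = m.q2 ∩ m.cC ∨ m.dD = (m.q2 ∩ m.cC) \ MaxSet m.pre (m.q2 ∩ m.cC)))

/-- The NBA `U` constructed from an AWA `M`, a round-robin successor `next` on SCCs
and an initial SCC `C₀`. -/
def Uaut {α : Type v} {Q : Type u} (M : ABA α Q) (next : Set Q → Set Q) (C0 : Set Q) :
    NBA α (UState Q) where
  init := {m | UWF M m ∧ M.init ∈ m.q1 ∧ m.cC = C0 ∧ m.dD = ∅}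
  delta := fun m σ =>
    {m' | UWF M m ∧ UWF M m' ∧
      (∀ s ∈ m.q1, PosBool.Sat m'.q1 (M.delta s σ)) ∧
      (∀ s ∈ m.q2, PosBool.Sat m'.q2 (M.dual.delta s σ)) ∧
      (m.dD = ∅ → m'.cC = next m.cC ∧
        (m'.cC ⊆ M.RejPart → m'.dD = m'.q1 ∩ m'.cC) ∧
        (m'.cC ⊆ M.AccPart → m'.dD = m'.q2 ∩ m'.cC)) ∧
      (m.dD ≠ ∅ → m'.cC = m.cC ∧
        (m.cC ⊆ M.RejPart →
          RuleR1 M m.cC σ m.q1 m'.q1 m.pre m'.pre ∧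
          DownClosed m'.pre (m'.q1 ∩ m.cC) m'.dD ∧
          (∀ s ∈ m.dD, PosBool.Sat (m'.dD ∪ (m'.q1 \ m.cC)) (M.delta s σ)) ∧
          (∀ D'', DownClosed m'.pre (m'.q1 ∩ m.cC) D'' →
            (∀ s ∈ m.dD, PosBool.Sat (D'' ∪ (m'.q1 \ m.cC)) (M.delta s σ)) → m'.dD ⊆ D'')) ∧
        (m.cC ⊆ M.AccPart →
          RuleR2 M m.cC σ m.q1 m'.q1 m.pre m'.pre ∧
          DownClosed m'.pre (m'.q2 ∩ m.cC) m'.dD ∧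
          (∀ s ∈ m.dD, PosBool.Sat (m'.dD ∪ (m'.q2 \ m.cC)) (M.dual.delta s σ)) ∧
          (∀ D'', DownClosed m'.pre (m'.q2 ∩ m.cC) D'' →
            (∀ s ∈ m.dD, PosBool.Sat (D'' ∪ (m'.q2 \ m.cC)) (M.dual.delta s σ)) → m'.dD ⊆ D'')))}
  acc := {m | UWF M m ∧ m.dD = ∅}

/-- `tpo n`: the number of total preorders on an `n`-element set. -/
noncomputable def tpo (n : ℕ) : ℕ :=
  Nat.card {r : Fin n → Fin n → Prop // Reflexive r ∧ Transitive r ∧ ∀ a b, r a b ∨ r b a}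



/-! ### Formulas, duals, SCCs and winning families -/

namespace PosBool

variable {Q : Type u}

lemma sat_mono {Y Z : Set Q} (h : Y ⊆ Z) : ∀ θ : PosBool Q, Sat Y θ → Sat Z θ
  | .tt, _ => trivial
  | .ff, hs => hs
  | .var _, hs => h hs
  | .band θ₁ θ₂, hs => ⟨sat_mono h θ₁ hs.1, sat_mono h θ₂ hs.2⟩
  | .bor θ₁ θ₂, hs => hs.imp (sat_mono h θ₁) (sat_mono h θ₂)

lemma sat_inter_vars {Y : Set Q} : ∀ {θ : PosBool Q}, Sat Y θ → Sat (Y ∩ vars θ) θ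
  | .tt, _ => trivial
  | .ff, hs => hs
  | .var _, hs => ⟨hs, rfl⟩
  | .band _ _, hs =>
    ⟨sat_mono (Set.inter_subset_inter_right _ Set.subset_union_left) _ (sat_inter_vars hs.1),
     sat_mono (Set.inter_subset_inter_right _ Set.subset_union_right) _ (sat_inter_vars hs.2)⟩
  | .bor _ _, hs => hs.imp
    (fun h => sat_mono (Set.inter_subset_inter_right _ Set.subset_union_left) _ (sat_inter_vars h))
    (fun h => sat_mono (Set.inter_subset_inter_right _ Set.subset_union_right) _ (sat_inter_vars h))

lemma sat_dual {Y : Set Q} : ∀ {θ : PosBool Q}, Sat Y θ.dual ↔ ¬ Sat Yᶜ θ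
  | .tt => by simp [dual, Sat]
  | .ff => by simp [dual, Sat]
  | .var _ => by simp [dual, Sat]
  | .band θ₁ θ₂ => by
    simp only [dual, Sat, sat_dual (θ := θ₁), sat_dual (θ := θ₂)]; tauto
  | .bor θ₁ θ₂ => by
    simp only [dual, Sat, sat_dual (θ := θ₁), sat_dual (θ := θ₂)]; tauto

lemma dual_dual : ∀ θ : PosBool Q, θ.dual.dual = θ
  | .tt => rfl
  | .ff => rfl
  | .var _ => rfl
  | .band θ₁ θ₂ => by simp [dual, dual_dual θ₁, dual_dual θ₂]
  | .bor θ₁ θ₂ => by simp [dual, dual_dual θ₁, dual_dual θ₂]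

lemma vars_dual : ∀ θ : PosBool Q, θ.dual.vars = θ.vars
  | .tt => rfl
  | .ff => rfl
  | .var _ => rfl
  | .band θ₁ θ₂ => by simp [dual, vars, vars_dual θ₁, vars_dual θ₂]
  | .bor θ₁ θ₂ => by simp [dual, vars, vars_dual θ₁, vars_dual θ₂]

/-- A model of a formula and a model of its dual always intersect. -/
lemma sat_meet {Y Z : Set Q} {θ : PosBool Q} (hY : Sat Y θ) (hZ : Sat Z θ.dual) :
    ∃ x, x ∈ Y ∧ x ∈ Z := by
  by_contra! h
  exact sat_dual.1 hZ (sat_mono (fun x hx => h x hx) _ hY)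

end PosBool

namespace ABA

open PosBool

variable {α : Type v} {Q : Type u}

lemma dual_dual (M : ABA α Q) : M.dual.dual = M := by
  cases M; simp [dual, PosBool.dual_dual]

lemma dual_sccOf (M : ABA α Q) : M.dual.sccOf = M.sccOf := by
  have : M.dual.edge = M.edge := by
    funext q q'; simp [edge, dual, vars_dual]
  funext q; simp [sccOf, reach, this]

lemma dual_reach (M : ABA α Q) : M.dual.reach = M.reach := by
  have : M.dual.edge = M.edge := by
    funext q q'; simp [edge, dual, vars_dual]
  simp [reach, this]

lemma dual_edge (M : ABA α Q) : M.dual.edge = M.edge := by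
  funext q q'; simp [edge, dual, vars_dual]

lemma inter_compl_empty_iff (S T : Set Q) : S ∩ Tᶜ = ∅ ↔ S ⊆ T := by
  rw [← Set.disjoint_iff_inter_eq_empty, Set.disjoint_compl_right_iff_subset]

lemma dual_rejPart (M : ABA α Q) : M.dual.RejPart = M.AccPart := by
  ext q
  simp only [RejPart, AccPart, dual_sccOf, Set.mem_ofPred_eq]
  exact inter_compl_empty_iff _ _

lemma dual_isSCC (M : ABA α Q) (C : Set Q) : M.dual.IsSCC C ↔ M.IsSCC C := by
  simp [IsSCC, dual_sccOf]

lemma dual_isWeak {M : ABA α Q} (h : M.IsWeak) : M.dual.IsWeak := by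
  intro q
  rw [dual_sccOf]
  rcases h q with h | h
  · right; exact (inter_compl_empty_iff _ _).2 h
  · left; exact fun x hx hx' => (h ▸ (⟨hx, hx'⟩ : x ∈ M.sccOf q ∩ M.acc) : x ∈ (∅ : Set Q))

lemma self_mem_sccOf (M : ABA α Q) (q : Q) : q ∈ M.sccOf q :=
  ⟨Relation.ReflTransGen.refl, Relation.ReflTransGen.refl⟩

lemma sccOf_eq {M : ABA α Q} {p q : Q} (h : p ∈ M.sccOf q) : M.sccOf p = M.sccOf q := by
  ext x
  exact ⟨fun hx => ⟨h.1.trans hx.1, hx.2.trans h.2⟩, fun hx => ⟨h.2.trans hx.1, hx.2.trans h.1⟩⟩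

lemma IsSCC.eq_sccOf {M : ABA α Q} {C : Set Q} (hC : M.IsSCC C) {q : Q} (hq : q ∈ C) :
    C = M.sccOf q := by
  obtain ⟨p, rfl⟩ := hC
  exact (sccOf_eq hq).symm

/-- An SCC is included in exactly one of the two parts. -/
lemma IsSCC.cases {M : ABA α Q} (hw : M.IsWeak) {C : Set Q} (hC : M.IsSCC C) :
    (C ⊆ M.RejPart ∧ ¬ C ⊆ M.AccPart) ∨ (C ⊆ M.AccPart ∧ ¬ C ⊆ M.RejPart) := by
  obtain ⟨q, rfl⟩ := hC
  have hq := M.self_mem_sccOf q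
  have hex : ∀ p, p ∈ M.RejPart → p ∈ M.AccPart → False := fun p h1 h2 =>
    (h1 ▸ (⟨M.self_mem_sccOf p, h2 (M.self_mem_sccOf p)⟩ : p ∈ M.sccOf p ∩ M.acc) :
      p ∈ (∅ : Set Q))
  rcases hw q with h | h
  · have : M.sccOf q ⊆ M.AccPart := fun p hp => by
      simpa [AccPart, sccOf_eq hp] using h
    exact Or.inr ⟨this, fun h' => hex q (h' hq) (this hq)⟩
  · have : M.sccOf q ⊆ M.RejPart := fun p hp => by
      simpa [RejPart, sccOf_eq hp] using h
    exact Or.inl ⟨this, fun h' => hex q (this hq) (h' hq)⟩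

/-- `M.layer w C P n i`: the states of `C ∩ P i` of rank at most `n`, i.e. those from which the
branches can be forced, inside `P`, to leave `C` within `n` steps when reading `w` from position
`i` on. -/
def layer (M : ABA α Q) (w : ℕ → α) (C : Set Q) (P : ℕ → Set Q) : ℕ → ℕ → Set Q
  | 0, _ => ∅
  | n + 1, i => {q | q ∈ C ∩ P i ∧
      Sat (layer M w C P n (i + 1) ∪ (P (i + 1) \ C)) (M.delta q (w i))}

section layer

variable {M : ABA α Q} {w : ℕ → α} {C : Set Q} {P : ℕ → Set Q}

lemma layer_subset (n i : ℕ) : M.layer w C P n i ⊆ C ∩ P i := by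
  cases n with
  | zero => exact Set.empty_subset _
  | succ n => exact fun q hq => hq.1

lemma layer_mono_succ (n : ℕ) : ∀ i, M.layer w C P n i ⊆ M.layer w C P (n + 1) i := by
  induction n with
  | zero => exact fun i => Set.empty_subset _
  | succ n ih =>
    exact fun i q hq => ⟨hq.1, sat_mono (Set.union_subset_union_left _ (ih _)) _ hq.2⟩

lemma layer_mono {m n : ℕ} (h : m ≤ n) (i : ℕ) : M.layer w C P m i ⊆ M.layer w C P n i :=
  monotone_nat_of_le_succ (f := fun n => M.layer w C P n i) (fun n => layer_mono_succ n i) h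

lemma layer_mono_set {P' : ℕ → Set Q} (h : ∀ i, P i ⊆ P' i) (n : ℕ) :
    ∀ i, M.layer w C P n i ⊆ M.layer w C P' n i := by
  induction n with
  | zero => exact fun i => subset_rfl
  | succ n ih =>
    exact fun i q hq => ⟨⟨hq.1.1, h _ hq.1.2⟩,
      sat_mono (Set.union_subset_union (ih _) (Set.sdiff_subset_sdiff_left (h _))) _ hq.2⟩

/-- On a finite set, pointwise finiteness of ranks gives a uniform bound. -/
lemma exists_layer_bound [Finite Q] {D : Set Q} {i : ℕ}
    (h : ∀ q ∈ D, ∃ n, q ∈ M.layer w C P n i) : ∃ n, D ⊆ M.layer w C P n i := by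
  choose! f hf using h
  obtain ⟨b, hb⟩ := (Set.toFinite (f '' D)).bddAbove
  exact ⟨b, fun q hq => layer_mono (hb ⟨q, hq, rfl⟩) i (hf q hq)⟩

end layer

/-- A self-supporting family of claims "`w[i⋯]` is accepted from `q`" for `q ∈ P i`: every claim is
justified by those of the next level, and inside rejecting SCCs all ranks are finite. -/
structure Winning (M : ABA α Q) (w : ℕ → α) (P : ℕ → Set Q) : Prop where
  sat : ∀ i, ∀ q ∈ P i, Sat (P (i + 1)) (M.delta q (w i))
  rank : ∀ i, ∀ q ∈ P i, q ∈ M.RejPart → ∃ n, q ∈ M.layer w (M.sccOf q) P n i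

/-- The largest winning family. -/
def win (M : ABA α Q) (w : ℕ → α) (i : ℕ) : Set Q := {q | ∃ P, M.Winning w P ∧ q ∈ P i}

lemma Winning.subset_win {M : ABA α Q} {w : ℕ → α} {P : ℕ → Set Q} (h : M.Winning w P) (i : ℕ) :
    P i ⊆ M.win w i := fun _ hq => ⟨P, h, hq⟩

lemma win_winning (M : ABA α Q) (w : ℕ → α) : M.Winning w (M.win w) where
  sat := by
    rintro i q ⟨P, hP, hq⟩
    exact sat_mono (hP.subset_win _) _ (hP.sat i q hq)
  rank := by
    rintro i q ⟨P, hP, hq⟩ hr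
    obtain ⟨n, hn⟩ := hP.rank i q hq hr
    exact ⟨n, layer_mono_set hP.subset_win n i hn⟩

lemma Winning.bound [Finite Q] {M : ABA α Q} {w : ℕ → α} {P : ℕ → Set Q} (h : M.Winning w P)
    {C : Set Q} (hC : M.IsSCC C) (hR : C ⊆ M.RejPart) (i : ℕ) :
    ∃ n, C ∩ P i ⊆ M.layer w C P n i :=
  exists_layer_bound fun q hq => by
    rw [hC.eq_sccOf hq.1]; exact h.rank i q hq.2 (hR hq.1)

lemma mem_win_of_sat [Finite Q] {M : ABA α Q} {w : ℕ → α} {i : ℕ} {q : Q}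
    (h : Sat (M.win w (i + 1)) (M.delta q (w i))) : q ∈ M.win w i := by
  -- adding the single claim `(q, i)` to the largest winning family keeps it winning
  let P : ℕ → Set Q := fun j => M.win w j ∪ {x | j = i ∧ x = q}
  have hsub : ∀ j, M.win w j ⊆ P j := fun j => Set.subset_union_left
  have hq : q ∈ P i := Or.inr ⟨rfl, rfl⟩
  refine Winning.subset_win (P := P) ⟨?_, ?_⟩ i hq
  · rintro j x (hx | ⟨rfl, rfl⟩)
    · exact sat_mono (hsub _) _ ((M.win_winning w).sat j x hx)
    · exact sat_mono (hsub _) _ h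
  · rintro j x (hx | ⟨rfl, rfl⟩) hr
    · obtain ⟨n, hn⟩ := (M.win_winning w).rank j x hx hr
      exact ⟨n, layer_mono_set hsub n j hn⟩
    · have hR : M.sccOf x ⊆ M.RejPart := fun p hp => by
        have hr' : M.sccOf x ∩ M.acc = ∅ := hr
        simpa [RejPart, sccOf_eq hp] using hr'
      obtain ⟨n, hn⟩ := (M.win_winning w).bound ⟨x, rfl⟩ hR (j + 1)
      refine ⟨n + 1, ⟨M.self_mem_sccOf x, hq⟩, sat_mono (fun y hy => ?_) _ h⟩
      by_cases hyC : y ∈ M.sccOf x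
      · exact Or.inl (layer_mono_set hsub n _ (hn ⟨hyC, hy⟩))
      · exact Or.inr ⟨hsub _ hy, hyC⟩

/-- Every finite-state path eventually stays in one SCC. -/
lemma eventually_scc [Finite Q] {M : ABA α Q} {b : ℕ → Q} (hb : ∀ i, M.edge (b i) (b (i + 1))) :
    ∃ N, ∀ m, N ≤ m → b m ∈ M.sccOf (b N) := by
  have hre : ∀ i j, i ≤ j → M.reach (b i) (b j) := by
    intro i j hij
    induction j, hij using Nat.le_induction with
    | base => exact Relation.ReflTransGen.refl
    | succ j _ ih => exact ih.tail (hb j)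
  obtain ⟨q, hq⟩ := Finite.exists_infinite_fiber b
  have hinf : (b ⁻¹' {q}).Infinite := Set.infinite_coe_iff.1 hq
  obtain ⟨N, hN⟩ := hinf.nonempty
  refine ⟨N, fun m hm => ⟨hre _ _ hm, ?_⟩⟩
  obtain ⟨m', hm', hlt⟩ := hinf.exists_gt m
  have e : b N = b m' := by rw [show b N = q from hN, show b m' = q from hm']
  rw [e]
  exact hre _ _ hlt.le

/-- A winning family admits a positional strategy (decrease the rank as long as a rejecting SCC is
not left), all of whose branches end up in accepting states. -/
lemma Winning.exists_strategy [Finite Q] {M : ABA α Q} (hweak : M.IsWeak) {w : ℕ → α}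
    {P : ℕ → Set Q} (h : M.Winning w P) :
    ∃ Y : ℕ → Q → Set Q,
      (∀ i, ∀ q ∈ P i, Sat (Y i q) (M.delta q (w i))) ∧
      (∀ i q, Y i q ⊆ P (i + 1)) ∧
      ∀ (i₀ : ℕ) (b : ℕ → Q), (∀ j, b j ∈ P (i₀ + j)) → (∀ j, b (j + 1) ∈ Y (i₀ + j) (b j)) →
        ∃ N, ∀ m, N ≤ m → b m ∈ M.acc := by
  refine ⟨fun i q => {x | x ∈ (M.delta q (w i)).vars ∧ x ∈ P (i + 1) ∧ (q ∈ M.RejPart →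
    ∀ n, q ∈ M.layer w (M.sccOf q) P (n + 1) i → x ∈ M.sccOf q →
      x ∈ M.layer w (M.sccOf q) P n (i + 1))}, ?_, fun i q x hx => hx.2.1, ?_⟩
  · intro i q hq
    by_cases hr : q ∈ M.RejPart
    · classical
      have hex := h.rank i q hq hr
      obtain ⟨k, hk⟩ : ∃ k, Nat.find hex = k + 1 := by
        rcases hf : Nat.find hex with _ | k
        · have := Nat.find_spec hex
          rw [hf] at this
          exact absurd this (Set.notMem_empty _)
        · exact ⟨k, rfl⟩
      have hqk := Nat.find_spec hex
      rw [hk] at hqk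
      refine sat_mono ?_ _ (sat_inter_vars hqk.2)
      rintro x ⟨hx | hx, hv⟩
      · refine ⟨hv, (layer_subset _ _ hx).2, fun _ n hn _ => ?_⟩
        have := Nat.find_min' hex hn
        exact layer_mono (by omega) _ hx
      · exact ⟨hv, hx.1, fun _ n _ hc => absurd hc hx.2⟩
    · refine sat_mono ?_ _ (sat_inter_vars (h.sat i q hq))
      exact fun x hx => ⟨hx.2, hx.1, fun h => absurd h hr⟩
  · intro i₀ b hbP hbY
    obtain ⟨N, hN⟩ := eventually_scc (M := M) (b := b) (fun j => ⟨_, (hbY j).1⟩)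
    refine ⟨N, fun m hm => ?_⟩
    rcases hweak (b N) with hacc | hrej
    · exact hacc (hN m hm)
    · exfalso
      have hR : ∀ m, N ≤ m → b m ∈ M.RejPart := fun m hm => by
        simpa [RejPart, sccOf_eq (hN m hm)] using hrej
      have hno : ∀ n m, N ≤ m → b m ∉ M.layer w (M.sccOf (b N)) P n (i₀ + m) := by
        intro n
        induction n with
        | zero => exact fun m _ => Set.notMem_empty _
        | succ n ih =>
          intro m hm hmem
          refine ih (m + 1) (by omega) ?_
          have := (hbY m).2.2 (hR m hm) n
          rw [sccOf_eq (hN m hm)] at this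
          exact this hmem (hN (m + 1) (by omega))
      obtain ⟨n, hn⟩ := h.rank _ _ (hbP N) (hR N le_rfl)
      exact hno n N le_rfl hn

end ABA

/-- Dependent choice along `ℕ`. -/
lemma exists_seq {β : Type*} {p : ℕ → β → Prop} {r : ℕ → β → β → Prop} {x₀ : β} (h₀ : p 0 x₀)
    (hs : ∀ i x, p i x → ∃ y, p (i + 1) y ∧ r i x y) :
    ∃ b : ℕ → β, b 0 = x₀ ∧ (∀ i, p i (b i)) ∧ ∀ i, r i (b i) (b (i + 1)) := by
  choose f hf hr using hs
  let g : ∀ i, {x // p i x} := fun i => Nat.rec ⟨x₀, h₀⟩ (fun i x => ⟨f i x.1 x.2, hf i x.1 x.2⟩) i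
  exact ⟨fun i => (g i).1, rfl, fun i => (g i).2, fun i => hr i _ (g i).2⟩

namespace ABA

open PosBool

variable {α : Type v} {Q : Type u} [Finite Q]

/-- A state is not winning for both players: otherwise two strategies produce a common branch that
is finally both in `acc` and outside of it. -/
lemma win_disjoint {M : ABA α Q} (hweak : M.IsWeak) {w : ℕ → α} {i : ℕ} {q : Q}
    (h1 : q ∈ M.win w i) (h2 : q ∈ M.dual.win w i) : False := by
  obtain ⟨Y, hY, hYP, hYb⟩ := (M.win_winning w).exists_strategy hweak
  obtain ⟨Z, hZ, hZP, hZb⟩ := (M.dual.win_winning w).exists_strategy (dual_isWeak hweak)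
  obtain ⟨b, -, hp, hr⟩ := exists_seq (x₀ := q)
    (p := fun j x => x ∈ M.win w (i + j) ∧ x ∈ M.dual.win w (i + j))
    (r := fun j x y => y ∈ Y (i + j) x ∧ y ∈ Z (i + j) x) ⟨h1, h2⟩ (by
      rintro j x ⟨hx1, hx2⟩
      obtain ⟨y, hy1, hy2⟩ := sat_meet (hY _ x hx1) (hZ _ x hx2)
      exact ⟨y, ⟨hYP _ _ hy1, hZP _ _ hy2⟩, hy1, hy2⟩)
  obtain ⟨N, hN⟩ := hYb i b (fun j => (hp j).1) (fun j => (hr j).1)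
  obtain ⟨N', hN'⟩ := hZb i b (fun j => (hp j).2) (fun j => (hr j).2)
  exact hN' (max N N') (le_max_right _ _) (hN _ (le_max_left _ _))

/-- Determinacy on a rejecting SCC, given determinacy on its successors: the states of `C` that are
not winning can be added to the dual winning family, where they need no rank. -/
lemma win_scc {M : ABA α Q} {w : ℕ → α} {C : Set Q} (hR : C ⊆ M.RejPart)
    (hdet : ∀ i x, (∃ c ∈ C, M.edge c x) → x ∉ C → x ∈ M.win w i ∨ x ∈ M.dual.win w i)
    (i : ℕ) {q : Q} (hq : q ∈ C) : q ∈ M.win w i ∨ q ∈ M.dual.win w i := by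
  by_contra! hcon
  let P : ℕ → Set Q := fun j => M.dual.win w j ∪ (C \ M.win w j)
  have hsub : ∀ j, M.dual.win w j ⊆ P j := fun j => Set.subset_union_left
  refine hcon.2 (Winning.subset_win (P := P) ⟨?_, ?_⟩ i (Or.inr ⟨hq, hcon.1⟩))
  · rintro j x (hx | hx)
    · exact sat_mono (hsub _) _ ((M.dual.win_winning w).sat j x hx)
    · change Sat _ (M.delta x (w j)).dual
      rw [sat_dual]
      intro hs
      refine hx.2 (mem_win_of_sat (sat_mono ?_ _ (sat_inter_vars hs)))
      rintro y ⟨hyP, hyv⟩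
      by_contra hyw
      by_cases hyC : y ∈ C
      · exact hyP (Or.inr ⟨hyC, hyw⟩)
      · rcases hdet (j + 1) y ⟨x, hx.1, _, hyv⟩ hyC with h | h
        · exact hyw h
        · exact hyP (Or.inl h)
  · rintro j x (hx | hx) hr
    · obtain ⟨n, hn⟩ := (M.dual.win_winning w).rank j x hx hr
      exact ⟨n, layer_mono_set hsub n j hn⟩
    · rw [dual_rejPart] at hr
      have h1 : M.sccOf x ∩ M.acc = ∅ := hR hx.1
      have h2 : x ∈ M.sccOf x ∩ M.acc := ⟨M.self_mem_sccOf x, hr (M.self_mem_sccOf x)⟩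
      rw [h1] at h2
      exact h2.elim

/-- Determinacy, by induction along the order of the SCCs. -/
lemma win_total {M : ABA α Q} (hweak : M.IsWeak) (w : ℕ → α) (q : Q) :
    ∀ i, q ∈ M.win w i ∨ q ∈ M.dual.win w i := by
  let r : Q → Q → Prop := fun x y => M.reach y x ∧ ¬ M.reach x y
  have : IsTrans Q r := ⟨fun x y z h1 h2 =>
    ⟨h2.1.trans h1.1, fun h => h2.2 (h1.1.trans h)⟩⟩
  have : Std.Irrefl r := ⟨fun x h => h.2 h.1⟩
  have hwf : WellFounded r := Finite.wellFounded_of_trans_of_irrefl r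
  induction q using hwf.induction with
  | _ q ih =>
    intro i
    have hdet : ∀ i x, (∃ c ∈ M.sccOf q, M.edge c x) → x ∉ M.sccOf q →
        x ∈ M.win w i ∨ x ∈ M.dual.win w i := by
      rintro i x ⟨c, hc, hcx⟩ hx
      have hqx : M.reach q x := hc.1.tail hcx
      exact ih x ⟨hqx, fun h => hx ⟨hqx, h⟩⟩ i
    rcases IsSCC.cases hweak ⟨q, rfl⟩ with h | h
    · exact win_scc h.1 hdet i (M.self_mem_sccOf q)
    · have hR : M.sccOf q ⊆ M.dual.RejPart := by rw [dual_rejPart]; exact h.1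
      have := win_scc (M := M.dual) (w := w) hR (by
        intro i x
        rw [dual_edge, dual_dual]
        exact fun h1 h2 => (hdet i x h1 h2).symm) i (M.self_mem_sccOf q)
      rw [dual_dual] at this
      exact this.symm

lemma dual_win {M : ABA α Q} (hweak : M.IsWeak) (w : ℕ → α) (i : ℕ) :
    M.dual.win w i = (M.win w i)ᶜ := by
  ext q
  exact ⟨fun h2 h1 => win_disjoint hweak h1 h2, fun h => (win_total hweak w q i).resolve_left h⟩

/-- A sequence that is winning for the automaton and whose complement is winning for the dual is
the sequence of winning regions. -/
lemma Winning.eq_win {M : ABA α Q} (hweak : M.IsWeak) {w : ℕ → α} {P : ℕ → Set Q}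
    (h1 : M.Winning w P) (h2 : M.dual.Winning w (fun i => (P i)ᶜ)) (i : ℕ) : P i = M.win w i := by
  refine (h1.subset_win i).antisymm fun q hq => ?_
  by_contra hqP
  exact win_disjoint hweak hq (h2.subset_win i hqP)

lemma mem_lang_iff {M : ABA α Q} (hweak : M.IsWeak) (w : ℕ → α) :
    w ∈ M.lang ↔ M.init ∈ M.win w 0 := by
  constructor
  · rintro ⟨G, hG⟩
    by_contra hn
    have h0 : M.init ∈ M.dual.win w 0 := (win_total hweak w _ 0).resolve_left hn
    obtain ⟨Z, hZ, hZP, hZb⟩ := (M.dual.win_winning w).exists_strategy (dual_isWeak hweak)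
    obtain ⟨b, hb0, hp, hr⟩ := exists_seq (x₀ := M.init)
      (p := fun j x => x ∈ G.V j ∧ x ∈ M.dual.win w (0 + j))
      (r := fun j x y => G.E j x y ∧ y ∈ Z (0 + j) x) ⟨G.init_mem, h0⟩ (by
        rintro j x ⟨hx1, hx2⟩
        have hs := hZ _ x hx2
        rw [Nat.zero_add] at hs
        obtain ⟨y, hy1, hy2⟩ := sat_meet (G.sat j x hx1) hs
        refine ⟨y, ⟨G.edge_tgt _ _ _ hy1, ?_⟩, hy1, by rwa [Nat.zero_add]⟩
        have := hZP _ _ hy2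
        rwa [Nat.zero_add])
    obtain ⟨N, hN⟩ := hZb 0 b (fun j => (hp j).2) (fun j => (hr j).2)
    obtain ⟨m, hm, hacc⟩ := hG b ⟨hb0, fun j => (hr j).1⟩ N
    exact hN m hm hacc
  · intro h0
    obtain ⟨Y, hY, hYP, hYb⟩ := (M.win_winning w).exists_strategy hweak
    let G : M.RunDAG w :=
      { V := M.win w
        E := fun i q q' => q ∈ M.win w i ∧ q' ∈ Y i q
        init_mem := h0
        edge_src := fun i q q' h => h.1
        edge_tgt := fun i q q' h => hYP _ _ h.2
        sat := fun i q hq => by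
          refine sat_mono ?_ _ (hY i q hq)
          exact fun x hx => ⟨hq, hx⟩ }
    refine ⟨G, fun b hb n => ?_⟩
    obtain ⟨N, hN⟩ := hYb 0 b (fun j => by rw [Nat.zero_add]; exact (hb.2 j).1)
      (fun j => by rw [Nat.zero_add]; exact (hb.2 j).2)
    exact ⟨max n N, le_max_left _ _, hN _ (le_max_right _ _)⟩

end ABA

/-! ### Total preorders and ranks -/

section preorder

variable {Q : Type u}

lemma IsTotalPreorderOn.not_strict {X : Set Q} {le : Q → Q → Prop} (h : IsTotalPreorderOn X le)
    {p q : Q} (hp : p ∈ X) (hq : q ∈ X) : ¬ StrictOf le p q ↔ le q p := by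
  have := h.2.2.2 p hp q hq
  unfold StrictOf; tauto

lemma IsTotalPreorderOn.le_iff {X : Set Q} {le : Q → Q → Prop} (h : IsTotalPreorderOn X le)
    {p q : Q} : le p q ↔ p ∈ X ∧ q ∈ X ∧ ¬ StrictOf le q p :=
  ⟨fun hpq => ⟨(h.1 _ _ hpq).1, (h.1 _ _ hpq).2, fun hs => hs.2 hpq⟩,
    fun hpq => (h.not_strict hpq.2.1 hpq.1).1 hpq.2.2⟩

lemma IsTotalPreorderOn.exists_minimal [Finite Q] {X S : Set Q} {le : Q → Q → Prop}
    (h : IsTotalPreorderOn X le) (hS : S.Nonempty) : ∃ r ∈ S, ∀ x ∈ S, ¬ StrictOf le x r := by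
  have : IsTrans Q (StrictOf le) := ⟨fun x y z h1 h2 =>
    ⟨h.2.2.1 _ _ _ h1.1 h2.1, fun h' => h1.2 (h.2.2.1 _ _ _ h2.1 h')⟩⟩
  have : Std.Irrefl (StrictOf le) := ⟨fun x h => h.2 h.1⟩
  exact (Finite.wellFounded_of_trans_of_irrefl (StrictOf le)).has_min S hS

/-- Elements outside of a downwards closed set lie strictly above its elements. -/
lemma IsTotalPreorderOn.strict_of_down {X D : Set Q} {le : Q → Q → Prop}
    (h : IsTotalPreorderOn X le) (hD : DownClosed le X D) {x y : Q} (hx : x ∈ D) (hy : y ∈ X)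
    (hyD : y ∉ D) : StrictOf le x y := by
  by_contra hn
  exact hyD (hD.2 x hx y ((h.not_strict (hD.1 hx) hy).1 hn))

/-- Downwards closed sets form a finite chain, so there is a least one with a given property. -/
lemma IsTotalPreorderOn.exists_least [Finite Q] {X : Set Q} {le : Q → Q → Prop}
    (h : IsTotalPreorderOn X le) {f : Set Q → Prop} (hX : f X) :
    ∃ D, DownClosed le X D ∧ f D ∧ ∀ D', DownClosed le X D' → f D' → D ⊆ D' := by
  obtain ⟨D, hD, hmin⟩ := (Set.toFinite {D | DownClosed le X D ∧ f D}).exists_minimal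
    ⟨X, ⟨subset_rfl, fun q _ q' hq' => (h.1 _ _ hq').1⟩, hX⟩
  refine ⟨D, hD.1, hD.2, fun D' hD' hf => ?_⟩
  by_contra hn
  obtain ⟨x, hx, hx'⟩ := Set.not_subset.1 hn
  refine hn (hmin (y := D') ⟨hD', hf⟩ fun y hy => ?_)
  exact hD.1.2 x hx y (h.strict_of_down hD' hy (hD.1.1 hx) hx').1

end preorder

namespace ABA

open PosBool

variable {α : Type v} {Q : Type u}

/-- `p` has smaller rank than `q` at position `i`. -/
def RankLt (M : ABA α Q) (w : ℕ → α) (C : Set Q) (P : ℕ → Set Q) (i : ℕ) (p q : Q) : Prop :=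
  ∃ n, p ∈ M.layer w C P n i ∧ q ∉ M.layer w C P n i

/-- The preorder "rank of `p` ≤ rank of `q`" on `C ∩ P i`. -/
def rankLe (M : ABA α Q) (w : ℕ → α) (C : Set Q) (P : ℕ → Set Q) (i : ℕ) (p q : Q) : Prop :=
  p ∈ C ∩ P i ∧ q ∈ C ∩ P i ∧ ∀ n, q ∈ M.layer w C P n i → p ∈ M.layer w C P n i

/-- `D` is a downwards closed set of states of finite rank, and `le` compares the elements of `D`
with all others by rank. -/
structure Agrees (M : ABA α Q) (w : ℕ → α) (C : Set Q) (P : ℕ → Set Q) (le : Q → Q → Prop)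
    (D : Set Q) (i : ℕ) : Prop where
  down : DownClosed le (C ∩ P i) D
  bound : ∃ n, D ⊆ M.layer w C P n i
  lt : ∀ p ∈ D, ∀ q ∈ C ∩ P i, StrictOf le p q ↔ M.RankLt w C P i p q

section rank

variable {M : ABA α Q} {w : ℕ → α} {C : Set Q} {P : ℕ → Set Q} {i : ℕ}

lemma inter_union_diff (S T : Set Q) : S ∩ T ∪ T \ S = T := by
  ext x; by_cases hx : x ∈ S <;> simp [hx]

lemma Agrees.eq_layer {le : Q → Q → Prop} {D : Set Q}
    (htot : IsTotalPreorderOn (C ∩ P i) le) (h : M.Agrees w C P le D i) :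
    ∃ n, D = M.layer w C P n i := by
  classical
  have hn := Nat.find_spec h.bound
  refine ⟨Nat.find h.bound, hn.antisymm fun y hy => ?_⟩
  rcases hf : Nat.find h.bound with _ | k
  · rw [hf] at hy
    exact absurd hy (Set.notMem_empty _)
  · obtain ⟨x, hxD, hx⟩ := Set.not_subset.1 (Nat.find_min h.bound (m := k) (by omega))
    by_contra hyD
    have hyX := layer_subset _ _ hy
    obtain ⟨n, hxn, hyn⟩ :=
      (h.lt x hxD y hyX).1 (htot.strict_of_down h.down hxD hyX hyD)
    have hkn : k < n := by
      by_contra hkn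
      exact hx (layer_mono (not_lt.1 hkn) _ hxn)
    rw [hf] at hy
    exact hyn (layer_mono hkn _ hy)

/-- One backward step: if the order at level `i + 1` is the rank order as far as `D'` is concerned,
then the right-hand side of the rule at level `i` compares ranks, provided the left state is
supported by `D'`. -/
lemma rule_iff [Finite Q] {le' : Q → Q → Prop} {D' : Set Q}
    (htot : IsTotalPreorderOn (C ∩ P (i + 1)) le') (h : M.Agrees w C P le' D' (i + 1))
    {p q : Q} (hp : p ∈ C ∩ P i) (hq : q ∈ C ∩ P i)
    (hpD : Sat (D' ∪ (P (i + 1) \ C)) (M.delta p (w i)))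
    (hqP : Sat (P (i + 1)) (M.delta q (w i))) :
    (∃ r ∈ C ∩ P (i + 1),
      Sat ({r' | r' ∈ C ∩ P (i + 1) ∧ StrictOf le' r' r} ∪ (P (i + 1) \ C)) (M.delta p (w i)) ∧
      ¬ Sat ({r' | r' ∈ C ∩ P (i + 1) ∧ StrictOf le' r' r} ∪ (P (i + 1) \ C)) (M.delta q (w i)))
    ↔ M.RankLt w C P i p q := by
  obtain ⟨m, rfl⟩ := h.eq_layer htot
  constructor
  · rintro ⟨r, hr, hrp, hrq⟩
    by_cases hrD : r ∈ M.layer w C P m (i + 1)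
    · -- below `r` lie exactly the states of rank less than the rank `k + 1` of `r`
      classical
      have hex : ∃ n, r ∈ M.layer w C P n (i + 1) := ⟨m, hrD⟩
      obtain ⟨k, hk⟩ : ∃ k, Nat.find hex = k + 1 := by
        rcases hf : Nat.find hex with _ | k
        · have := Nat.find_spec hex
          rw [hf] at this
          exact absurd this (Set.notMem_empty _)
        · exact ⟨k, rfl⟩
      have hrk := Nat.find_spec hex
      rw [hk] at hrk
      have hkm : k + 1 ≤ m := hk ▸ Nat.find_min' hex hrD
      have hrk' : r ∉ M.layer w C P k (i + 1) := Nat.find_min hex (by omega)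
      have hset : {r' | r' ∈ C ∩ P (i + 1) ∧ StrictOf le' r' r} = M.layer w C P k (i + 1) := by
        ext x
        constructor
        · rintro ⟨hxX, hxr⟩
          obtain ⟨n, hxn, hrn⟩ := (h.lt x (h.down.2 r hrD x hxr.1) r hr).1 hxr
          have : n < k + 1 := by
            by_contra hnk
            exact hrn (layer_mono (not_lt.1 hnk) _ hrk)
          exact layer_mono (by omega) _ hxn
        · intro hx
          exact ⟨layer_subset _ _ hx, (h.lt x (layer_mono (by omega) _ hx) r hr).2 ⟨k, hx, hrk'⟩⟩
      rw [hset] at hrp hrq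
      exact ⟨k + 1, ⟨hp, hrp⟩, fun h => hrq h.2⟩
    · refine ⟨m + 1, ⟨hp, hpD⟩, fun h' => hrq (sat_mono ?_ _ h'.2)⟩
      exact Set.union_subset_union_left _ fun x hx =>
        ⟨h.down.1 hx, htot.strict_of_down h.down hx hr hrD⟩
  · rintro ⟨n, hpn, hqn⟩
    -- a rank `k ≤ m` at the next level that separates `p` from `q`
    obtain ⟨k, hkm, hkp, hkq⟩ : ∃ k ≤ m,
        Sat (M.layer w C P k (i + 1) ∪ (P (i + 1) \ C)) (M.delta p (w i)) ∧
        ¬ Sat (M.layer w C P k (i + 1) ∪ (P (i + 1) \ C)) (M.delta q (w i)) := by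
      cases n with
      | zero => exact absurd hpn (Set.notMem_empty _)
      | succ n =>
        have hqn' : ¬ Sat (M.layer w C P n (i + 1) ∪ (P (i + 1) \ C)) (M.delta q (w i)) :=
          fun h => hqn ⟨hq, h⟩
        rcases le_total n m with hnm | hmn
        · exact ⟨n, hnm, hpn.2, hqn'⟩
        · exact ⟨m, le_rfl, hpD, fun h => hqn' (sat_mono
            (Set.union_subset_union_left _ (layer_mono hmn _)) _ h)⟩
    have hne : ((C ∩ P (i + 1)) \ M.layer w C P k (i + 1)).Nonempty := by
      by_contra hemp
      refine hkq (sat_mono (fun y hy => ?_) _ hqP)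
      by_cases hyC : y ∈ C
      · by_contra hyn
        exact hemp ⟨y, ⟨hyC, hy⟩, fun h => hyn (Or.inl h)⟩
      · exact Or.inr ⟨hy, hyC⟩
    obtain ⟨r, hr, hmin⟩ := htot.exists_minimal hne
    have hset : {r' | r' ∈ C ∩ P (i + 1) ∧ StrictOf le' r' r} = M.layer w C P k (i + 1) := by
      ext x
      constructor
      · rintro ⟨hxX, hxr⟩
        by_contra hx
        exact hmin x ⟨hxX, hx⟩ hxr
      · intro hx
        exact ⟨layer_subset _ _ hx, (h.lt x (layer_mono hkm _ hx) r hr.1).2 ⟨k, hx, hr.2⟩⟩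
    refine ⟨r, hr.1, ?_, ?_⟩ <;> rwa [hset]

lemma Agrees.step [Finite Q] {le le' : Q → Q → Prop} {D D' : Set Q}
    (htot : IsTotalPreorderOn (C ∩ P (i + 1)) le') (h : M.Agrees w C P le' D' (i + 1))
    (hsat : ∀ q ∈ P i, Sat (P (i + 1)) (M.delta q (w i)))
    (hrule : RuleR1 M C (w i) (P i) (P (i + 1)) le le')
    (hD : DownClosed le (C ∩ P i) D)
    (hDD' : ∀ s ∈ D, Sat (D' ∪ (P (i + 1) \ C)) (M.delta s (w i))) :
    M.Agrees w C P le D i where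
  down := hD
  bound := by
    obtain ⟨n, hn⟩ := h.bound
    exact ⟨n + 1, fun s hs => ⟨hD.1 hs,
      sat_mono (Set.union_subset_union_left _ hn) _ (hDD' s hs)⟩⟩
  lt := fun p hp q hq => (hrule p (hD.1 hp) q hq).trans
    (rule_iff htot h (hD.1 hp) hq (hDD' p hp) (hsat q hq.2))

lemma Agrees.empty {le : Q → Q → Prop} : M.Agrees w C P le ∅ i where
  down := ⟨Set.empty_subset _, fun _ h => h.elim⟩
  bound := ⟨0, Set.empty_subset _⟩
  lt := fun _ h => h.elim

lemma rankLe_total : IsTotalPreorderOn (C ∩ P i) (M.rankLe w C P i) := by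
  refine ⟨fun p q h => ⟨h.1, h.2.1⟩, fun p hp => ⟨hp, hp, fun _ h => h⟩,
    fun p q r h1 h2 => ⟨h1.1, h2.2.1, fun n h => h1.2.2 n (h2.2.2 n h)⟩, fun p hp q hq => ?_⟩
  by_contra! hn
  have h1 : ∃ n, q ∈ M.layer w C P n i ∧ p ∉ M.layer w C P n i := by
    by_contra! h; exact hn.1 ⟨hp, hq, h⟩
  have h2 : ∃ n, p ∈ M.layer w C P n i ∧ q ∉ M.layer w C P n i := by
    by_contra! h; exact hn.2 ⟨hq, hp, h⟩
  obtain ⟨n, hqn, hpn⟩ := h1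
  obtain ⟨m, hpm, hqm⟩ := h2
  rcases le_total n m with h | h
  · exact hqm (layer_mono h _ hqn)
  · exact hpn (layer_mono h _ hpm)

lemma rankLe_strict {p q : Q} (hp : p ∈ C ∩ P i) (hq : q ∈ C ∩ P i) :
    StrictOf (M.rankLe w C P i) p q ↔ M.RankLt w C P i p q := by
  rw [← not_iff_not, rankLe_total.not_strict hp hq]
  simp [rankLe, RankLt, hp.1, hp.2, hq.1, hq.2]

lemma rankLe_agrees (h : ∃ n, C ∩ P i ⊆ M.layer w C P n i) :
    M.Agrees w C P (M.rankLe w C P i) (C ∩ P i) i where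
  down := ⟨subset_rfl, fun _ _ _ h => h.1⟩
  bound := h
  lt := fun _ hp _ hq => rankLe_strict hp hq

lemma Agrees.eq_rankLe {le : Q → Q → Prop} (htot : IsTotalPreorderOn (C ∩ P i) le)
    (h : M.Agrees w C P le (C ∩ P i) i) : le = M.rankLe w C P i := by
  funext p q
  rw [eq_iff_iff, htot.le_iff, rankLe_total.le_iff]
  constructor <;> rintro ⟨hp, hq, hs⟩ <;> refine ⟨hp, hq, ?_⟩
  · rwa [rankLe_strict hq hp, ← h.lt q hq p hp]
  · rwa [h.lt q hq p hp, ← rankLe_strict hq hp]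

lemma rankLe_rule [Finite Q] (hsat : ∀ q ∈ P i, Sat (P (i + 1)) (M.delta q (w i)))
    (hb : ∃ n, C ∩ P (i + 1) ⊆ M.layer w C P n (i + 1)) :
    RuleR1 M C (w i) (P i) (P (i + 1)) (M.rankLe w C P i) (M.rankLe w C P (i + 1)) := by
  intro p hp q hq
  rw [rankLe_strict hp hq, rule_iff rankLe_total (rankLe_agrees hb) hp hq ?_ (hsat q hq.2)]
  rw [inter_union_diff]
  exact hsat p hp.2

end rank

/-! ### A uniform presentation of the construction -/

open Classical in
/-- The automaton in which the SCC `C` of `M` is rejecting: `M` itself or its dual. -/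
noncomputable def sideAut (M : ABA α Q) (C : Set Q) : ABA α Q :=
  if C ⊆ M.RejPart then M else M.dual

open Classical in
/-- The component `Q₁` or `Q₂ = Q \ Q₁` of a macrostate that is relevant to the SCC `C`. -/
noncomputable def sideSet (M : ABA α Q) (C X : Set Q) : Set Q :=
  if C ⊆ M.RejPart then X else Xᶜ

lemma sideAut_scc (M : ABA α Q) (hweak : M.IsWeak) {C : Set Q} (hC : M.IsSCC C) :
    (M.sideAut C).IsSCC C ∧ C ⊆ (M.sideAut C).RejPart := by
  rcases hC.cases hweak with h | h
  · simp [sideAut, h.1, hC]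
  · simp [sideAut, h.2, dual_isSCC, dual_rejPart, hC, h.1]

end ABA

section Bu

open PosBool ABA

variable {α : Type v} {Q : Type u}

lemma ruleR2_iff (M : ABA α Q) (C : Set Q) (σ : α) (X X' : Set Q) (le le' : Q → Q → Prop) :
    RuleR2 M C σ X X' le le' ↔ RuleR1 M.dual C σ Xᶜ X'ᶜ le le' := by
  simp only [RuleR1, RuleR2, Set.compl_union, Set.sdiff_eq]

lemma buWF_iff {M : ABA α Q} (hweak : M.IsWeak) (m : BuState Q) :
    BuWF M m ↔ m.q2 = m.q1ᶜ ∧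
      (∀ C, M.IsSCC C → IsTotalPreorderOn (C ∩ M.sideSet C m.q1) (m.pre C)) ∧
      (∀ C, ¬ M.IsSCC C → m.pre C = fun _ _ => False) ∧ M.IsSCC m.sS ∧
      DownClosed (m.pre m.sS) (m.sS ∩ M.sideSet m.sS m.q1) m.dD := by
  unfold BuWF
  refine and_congr_right fun h2 => and_congr ?_ (and_congr_right fun _ =>
    and_congr_right fun hS => ?_)
  · refine forall_congr' fun C => forall_congr' fun hC => ?_
    rcases hC.cases hweak with h | h <;> simp [sideSet, h.1, h.2, h2, Set.inter_comm C]
  · rcases hS.cases hweak with h | h <;> simp [sideSet, h.1, h.2, h2, Set.inter_comm m.sS]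

/-- The evolution of the last two components `(S, D)` of a macrostate. -/
def TrackStep (M : ABA α Q) (next : Set Q → Set Q) (σ : α) (X' : Set Q)
    (pre' : Set Q → Q → Q → Prop) (x x' : Set Q × Set Q) : Prop :=
  (x.2 = ∅ → x'.1 = next x.1 ∧ x'.2 = x'.1 ∩ M.sideSet x'.1 X') ∧
  (x.2 ≠ ∅ → x'.1 = x.1 ∧
    (∀ s ∈ x.2, Sat (x'.2 ∪ (M.sideSet x.1 X' \ x.1)) ((M.sideAut x.1).delta s σ)) ∧
    ∀ D, DownClosed (pre' x.1) (x.1 ∩ M.sideSet x.1 X') D →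
      (∀ s ∈ x.2, Sat (D ∪ (M.sideSet x.1 X' \ x.1)) ((M.sideAut x.1).delta s σ)) → x'.2 ⊆ D)

lemma mem_bu_delta_iff {M : ABA α Q} (hweak : M.IsWeak) (next : Set Q → Set Q) (C0 : Set Q)
    (m m' : BuState Q) (σ : α) :
    m' ∈ (Bu M next C0).delta m σ ↔ BuWF M m ∧ BuWF M m' ∧
      (∀ s ∈ m.q1, Sat m'.q1 (M.delta s σ)) ∧ (∀ s ∈ m.q1ᶜ, Sat m'.q1ᶜ (M.dual.delta s σ)) ∧
      (∀ C, M.IsSCC C → RuleR1 (M.sideAut C) C σ (M.sideSet C m.q1) (M.sideSet C m'.q1)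
        (m.pre C) (m'.pre C)) ∧
      TrackStep M next σ m'.q1 m'.pre (m.sS, m.dD) (m'.sS, m'.dD) := by
  change _ ∧ _ ↔ _
  refine and_congr_right fun hm => and_congr_right fun hm' => and_congr_right fun _ => ?_
  have e1 := hm.1
  have e2 := hm'.1
  have hS : M.IsSCC m.sS := hm.2.2.2.1
  have hS' : M.IsSCC m'.sS := hm'.2.2.2.1
  rw [e1, e2]
  refine and_congr_right fun _ => and_congr ?_ (and_congr ?_ ?_)
  · refine forall_congr' fun C => forall_congr' fun hC => ?_
    rcases hC.cases hweak with h | h <;> simp [sideSet, sideAut, h.1, h.2, ruleR2_iff]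
  · refine forall_congr' fun _ => and_congr_right fun _ => ?_
    rcases hS'.cases hweak with h | h <;> simp [sideSet, h.1, h.2, Set.inter_comm m'.sS]
  · refine forall_congr' fun _ => and_congr_right fun _ => ?_
    rcases hS.cases hweak with h | h <;>
      simp [sideSet, sideAut, h.1, h.2, Set.inter_comm m.sS]

lemma TrackStep.unique {M : ABA α Q} {next : Set Q → Set Q} {σ : α} {X' : Set Q}
    {pre' : Set Q → Q → Q → Prop} {x y z : Set Q × Set Q}
    (hy : TrackStep M next σ X' pre' x y) (hz : TrackStep M next σ X' pre' x z)
    (hyD : DownClosed (pre' y.1) (y.1 ∩ M.sideSet y.1 X') y.2)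
    (hzD : DownClosed (pre' z.1) (z.1 ∩ M.sideSet z.1 X') z.2) : y = z := by
  by_cases h : x.2 = ∅
  · obtain ⟨a, b⟩ := hy.1 h
    obtain ⟨c, d⟩ := hz.1 h
    have e : y.1 = z.1 := a.trans c.symm
    exact Prod.ext e (by rw [b, d, e])
  · obtain ⟨a, b, c⟩ := hy.2 h
    obtain ⟨a', b', c'⟩ := hz.2 h
    rw [a] at hyD
    rw [a'] at hzD
    exact Prod.ext (a.trans a'.symm) ((c _ hzD b').antisymm (c' _ hyD b))

end Bu

/-! ### Accepting macroruns are determined by the word -/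

section macrorun

open PosBool ABA

variable {α : Type v} {Q : Type u} {M : ABA α Q} {next : Set Q → Set Q} {C0 : Set Q}
  {w : ℕ → α} {ρ : ℕ → BuState Q}

lemma macrorun_sat (hweak : M.IsWeak)
    (hρ : ∀ i, ρ (i + 1) ∈ (Bu M next C0).delta (ρ i) (w i)) {C : Set Q} (hC : M.IsSCC C) (i : ℕ) :
    ∀ s ∈ M.sideSet C (ρ i).q1,
      Sat (M.sideSet C (ρ (i + 1)).q1) ((M.sideAut C).delta s (w i)) := by
  have h := (mem_bu_delta_iff hweak next C0 _ _ _).1 (hρ i)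
  rcases hC.cases hweak with hh | hh
  · simpa [sideSet, sideAut, hh.1] using h.2.2.1
  · simpa [sideSet, sideAut, hh.2] using h.2.2.2.1

/-- The breakpoint component `S` does not change before the next breakpoint. -/
lemma exists_break (hweak : M.IsWeak)
    (hρ : ∀ i, ρ (i + 1) ∈ (Bu M next C0).delta (ρ i) (w i)) (k : ℕ) :
    ∀ a, (ρ (a + k)).dD = ∅ → ∃ e, a ≤ e ∧ (ρ e).dD = ∅ ∧ (ρ e).sS = (ρ a).sS := by
  induction k with
  | zero => exact fun a h => ⟨a, le_rfl, h, rfl⟩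
  | succ k ih =>
    intro a h
    by_cases ha : (ρ a).dD = ∅
    · exact ⟨a, le_rfl, ha, rfl⟩
    · obtain ⟨e, he, hd, hs⟩ := ih (a + 1) (by rwa [add_assoc, add_comm 1 k])
      have ht := ((mem_bu_delta_iff hweak next C0 _ _ _).1 (hρ a)).2.2.2.2.2
      exact ⟨e, by omega, hd, hs.trans (ht.2 ha).1⟩

variable [Finite Q]

/-- Going back from a breakpoint, the order on the tracked set `D` is forced to be the
rank order. -/
lemma agrees_of_break (hweak : M.IsWeak)
    (hρ : ∀ i, ρ (i + 1) ∈ (Bu M next C0).delta (ρ i) (w i)) {C : Set Q} (hC : M.IsSCC C) (k : ℕ) :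
    ∀ a, (ρ a).sS = C → (ρ (a + k)).dD = ∅ →
      (M.sideAut C).Agrees w C (fun i => M.sideSet C (ρ i).q1) ((ρ a).pre C) (ρ a).dD a := by
  induction k with
  | zero =>
    intro a _ h
    rw [add_zero] at h
    rw [h]
    exact Agrees.empty
  | succ k ih =>
    intro a hS h
    by_cases ha : (ρ a).dD = ∅
    · rw [ha]
      exact Agrees.empty
    · have hm := (mem_bu_delta_iff hweak next C0 _ _ _).1 (hρ a)
      have ht := hm.2.2.2.2.2.2 ha
      have wf := (buWF_iff hweak _).1 hm.1
      have wf' := (buWF_iff hweak _).1 hm.2.1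
      simp only [hS] at ht
      refine Agrees.step (wf'.2.1 C hC) (ih (a + 1) ht.1 (by rwa [add_assoc, add_comm 1 k]))
        (macrorun_sat hweak hρ hC a) (hm.2.2.2.2.1 C hC) ?_ ht.2.1
      have := wf.2.2.2.2
      rwa [hS] at this

/-- In an accepting macrorun every SCC is selected, with all its relevant states tracked, at
arbitrarily late positions. -/
lemma exists_activation (hweak : M.IsWeak) (hnext : ∀ C, M.IsSCC C → M.IsSCC (next C))
    (hcyc : ∀ C C', M.IsSCC C → M.IsSCC C' → ∃ k : ℕ, next^[k] C = C')
    (hρ : ∀ i, ρ (i + 1) ∈ (Bu M next C0).delta (ρ i) (w i))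
    (hacc : ∀ n, ∃ m, n ≤ m ∧ (ρ m).dD = ∅) {C : Set Q} (hC : M.IsSCC C) (N : ℕ) :
    ∃ t, N ≤ t ∧ (ρ t).sS = C ∧ (ρ t).dD = C ∩ M.sideSet C (ρ t).q1 := by
  have hm := fun i => (mem_bu_delta_iff hweak next C0 _ _ _).1 (hρ i)
  obtain ⟨t₀, ht₀, hd₀⟩ := hacc N
  have key : ∀ k, ∃ t, N ≤ t ∧ (ρ t).dD = ∅ ∧ (ρ t).sS = next^[k] (ρ t₀).sS := by
    intro k
    induction k with
    | zero => exact ⟨t₀, ht₀, hd₀, rfl⟩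
    | succ k ih =>
      obtain ⟨t, ht, hd, hs⟩ := ih
      obtain ⟨m, hm₁, hm₂⟩ := hacc (t + 1)
      obtain ⟨e, he, hde, hse⟩ := exists_break hweak hρ (m - (t + 1)) (t + 1)
        (by rwa [Nat.add_sub_cancel' hm₁])
      refine ⟨e, by omega, hde, ?_⟩
      rw [hse, Function.iterate_succ_apply', ← hs]
      exact ((hm t).2.2.2.2.2.1 hd).1
  have wf₀ := (buWF_iff hweak _).1 (hm t₀).1
  obtain ⟨k, hk⟩ := hcyc (next (ρ t₀).sS) C (hnext _ wf₀.2.2.2.1) hC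
  obtain ⟨t, ht, hd, hs⟩ := key k
  have h1 := (hm t).2.2.2.2.2.1 hd
  have hSC : (ρ (t + 1)).sS = C := by
    refine h1.1.trans ?_
    rw [← hk, ← Function.iterate_succ_apply, Function.iterate_succ_apply']
    exact congrArg next hs
  refine ⟨t + 1, by omega, hSC, ?_⟩
  have h2 := h1.2
  simp only [hSC] at h2
  exact h2

/-- In an accepting macrorun every preorder is the rank order on its whole domain: this holds when
`C` is selected, and it propagates to all earlier positions. -/
lemma agrees_all (hweak : M.IsWeak) (hnext : ∀ C, M.IsSCC C → M.IsSCC (next C))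
    (hcyc : ∀ C C', M.IsSCC C → M.IsSCC C' → ∃ k : ℕ, next^[k] C = C')
    (hρ : ∀ i, ρ (i + 1) ∈ (Bu M next C0).delta (ρ i) (w i))
    (hacc : ∀ n, ∃ m, n ≤ m ∧ (ρ m).dD = ∅) {C : Set Q} (hC : M.IsSCC C) (i : ℕ) :
    (M.sideAut C).Agrees w C (fun i => M.sideSet C (ρ i).q1) ((ρ i).pre C)
      (C ∩ M.sideSet C (ρ i).q1) i := by
  have hm := fun i => (mem_bu_delta_iff hweak next C0 _ _ _).1 (hρ i)
  obtain ⟨t, hit, hS, hD⟩ := exists_activation hweak hnext hcyc hρ hacc hC i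
  obtain ⟨m, htm, hdm⟩ := hacc t
  have ht := agrees_of_break hweak hρ hC (m - t) t hS (by rwa [Nat.add_sub_cancel' htm])
  rw [hD] at ht
  induction hit using Nat.decreasingInduction with
  | self => exact ht
  | of_succ j hj ih =>
    refine Agrees.step (((buWF_iff hweak _).1 (hm j).2.1).2.1 C hC) ih
      (macrorun_sat hweak hρ hC j) ((hm j).2.2.2.2.1 C hC)
      ⟨subset_rfl, fun q _ q' hq' => ((((buWF_iff hweak _).1 (hm j).1).2.1 C hC).1 _ _ hq').1⟩ ?_
    intro s hs
    rw [inter_union_diff]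
    exact macrorun_sat hweak hρ hC j s hs.2

lemma macrorun_q1 (hweak : M.IsWeak) (hnext : ∀ C, M.IsSCC C → M.IsSCC (next C))
    (hcyc : ∀ C C', M.IsSCC C → M.IsSCC C' → ∃ k : ℕ, next^[k] C = C')
    (hρ : ∀ i, ρ (i + 1) ∈ (Bu M next C0).delta (ρ i) (w i))
    (hacc : ∀ n, ∃ m, n ≤ m ∧ (ρ m).dD = ∅) (i : ℕ) : (ρ i).q1 = M.win w i := by
  have hm := fun i => (mem_bu_delta_iff hweak next C0 _ _ _).1 (hρ i)
  have hb := fun q i => (agrees_all hweak hnext hcyc hρ hacc (C := M.sccOf q) ⟨q, rfl⟩ i).bound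
  refine Winning.eq_win hweak (P := fun i => (ρ i).q1) ⟨fun i => (hm i).2.2.1, ?_⟩
    ⟨fun i => (hm i).2.2.2.1, ?_⟩ i
  · intro i q hq hqR
    obtain ⟨n, hn⟩ := hb q i
    have hR : M.sccOf q ⊆ M.RejPart := by
      rcases IsSCC.cases hweak (C := M.sccOf q) ⟨q, rfl⟩ with h | h
      · exact h.1
      · intro p hp
        change M.sccOf p ∩ M.acc = ∅
        rw [sccOf_eq hp]
        exact hqR
    simp only [sideAut, sideSet, hR, if_true] at hn
    exact ⟨n, hn ⟨M.self_mem_sccOf q, hq⟩⟩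
  · intro i q hq hqR
    obtain ⟨n, hn⟩ := hb q i
    rw [dual_rejPart] at hqR
    have hR : ¬ M.sccOf q ⊆ M.RejPart := by
      intro h
      rcases IsSCC.cases hweak (C := M.sccOf q) ⟨q, rfl⟩ with h' | h'
      · refine h'.2 fun p hp => ?_
        change M.sccOf p ⊆ M.acc
        rw [sccOf_eq hp]
        exact hqR
      · exact h'.2 h
    simp only [sideAut, sideSet, hR, if_false] at hn
    rw [dual_sccOf]
    exact ⟨n, hn ⟨M.self_mem_sccOf q, hq⟩⟩

open Classical in
/-- The family of rank orders of the word `w` at position `i`. -/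
noncomputable def winPre (M : ABA α Q) (w : ℕ → α) (i : ℕ) (C : Set Q) : Q → Q → Prop :=
  if M.IsSCC C then (M.sideAut C).rankLe w C (fun j => M.sideSet C (M.win w j)) i
  else fun _ _ => False

lemma macrorun_pre (hweak : M.IsWeak) (hnext : ∀ C, M.IsSCC C → M.IsSCC (next C))
    (hcyc : ∀ C C', M.IsSCC C → M.IsSCC C' → ∃ k : ℕ, next^[k] C = C')
    (hρ : ∀ i, ρ (i + 1) ∈ (Bu M next C0).delta (ρ i) (w i))
    (hacc : ∀ n, ∃ m, n ≤ m ∧ (ρ m).dD = ∅) (i : ℕ) : (ρ i).pre = winPre M w i := by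
  have wf := (buWF_iff hweak _).1 ((mem_bu_delta_iff hweak next C0 _ _ _).1 (hρ i)).1
  funext C
  by_cases hC : M.IsSCC C
  · have h := (agrees_all hweak hnext hcyc hρ hacc hC i).eq_rankLe (wf.2.1 C hC)
    simp only [macrorun_q1 hweak hnext hcyc hρ hacc] at h
    rw [h, winPre, if_pos hC]
  · rw [wf.2.2.1 C hC, winPre, if_neg hC]

lemma bu_unambiguous (hweak : M.IsWeak) (hnext : ∀ C, M.IsSCC C → M.IsSCC (next C))
    (hcyc : ∀ C C', M.IsSCC C → M.IsSCC C' → ∃ k : ℕ, next^[k] C = C') :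
    (Bu M next C0).Unambiguous := by
  rintro w ρ ρ' ⟨⟨h0, hρ⟩, hacc⟩ ⟨⟨h0', hρ'⟩, hacc'⟩
  have hacc₁ : ∀ n, ∃ m, n ≤ m ∧ (ρ m).dD = ∅ := fun n =>
    (hacc n).imp fun m hm => ⟨hm.1, hm.2.2⟩
  have hacc₂ : ∀ n, ∃ m, n ≤ m ∧ (ρ' m).dD = ∅ := fun n =>
    (hacc' n).imp fun m hm => ⟨hm.1, hm.2.2⟩
  have hm := fun i => (mem_bu_delta_iff hweak next C0 _ _ _).1 (hρ i)
  have hm' := fun i => (mem_bu_delta_iff hweak next C0 _ _ _).1 (hρ' i)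
  have wf := fun i => (buWF_iff hweak _).1 (hm i).1
  have wf' := fun i => (buWF_iff hweak _).1 (hm' i).1
  have e1 : ∀ i, (ρ i).q1 = (ρ' i).q1 := fun i =>
    (macrorun_q1 hweak hnext hcyc hρ hacc₁ i).trans
      (macrorun_q1 hweak hnext hcyc hρ' hacc₂ i).symm
  have e3 : ∀ i, (ρ i).pre = (ρ' i).pre := fun i =>
    (macrorun_pre hweak hnext hcyc hρ hacc₁ i).trans
      (macrorun_pre hweak hnext hcyc hρ' hacc₂ i).symm
  have e4 : ∀ i, ((ρ i).sS, (ρ i).dD) = ((ρ' i).sS, (ρ' i).dD) := by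
    intro i
    induction i with
    | zero => rw [h0.2.2.1, h0.2.2.2, h0'.2.2.1, h0'.2.2.2]
    | succ i ih =>
      have t := (hm i).2.2.2.2.2
      have t' := (hm' i).2.2.2.2.2
      have d := (wf (i + 1)).2.2.2.2
      rw [ih, e1, e3] at t
      rw [e1, e3] at d
      exact t.unique t' d (wf' (i + 1)).2.2.2.2
  funext i
  have e2 : (ρ i).q2 = (ρ' i).q2 := by rw [(wf i).1, (wf' i).1, e1]
  exact Prod.ext (e1 i) (Prod.ext e2 (Prod.ext (e3 i) (e4 i)))

lemma lang_bu_subset (hweak : M.IsWeak) (hnext : ∀ C, M.IsSCC C → M.IsSCC (next C))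
    (hcyc : ∀ C C', M.IsSCC C → M.IsSCC C' → ∃ k : ℕ, next^[k] C = C') :
    (Bu M next C0).lang ⊆ M.lang := by
  rintro w ⟨ρ, ⟨h0, hρ⟩, hacc⟩
  rw [mem_lang_iff hweak, ← macrorun_q1 hweak hnext hcyc hρ
    fun n => (hacc n).imp fun m hm => ⟨hm.1, hm.2.2⟩]
  exact h0.2.1

end macrorun

/-! ### The rank orders yield an accepting macrorun -/

section construct

open PosBool ABA

variable {α : Type v} {Q : Type u} [Finite Q] {M : ABA α Q} {next : Set Q → Set Q} {C0 : Set Q}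

lemma side_winning (hweak : M.IsWeak) (w : ℕ → α) (C : Set Q) :
    (M.sideAut C).Winning w (fun i => M.sideSet C (M.win w i)) := by
  by_cases h : C ⊆ M.RejPart
  · simpa [sideAut, sideSet, h] using M.win_winning w
  · have := M.dual.win_winning w
    simp only [sideAut, sideSet, h, if_false]
    simp only [← dual_win hweak]
    exact this

lemma side_bound (hweak : M.IsWeak) (w : ℕ → α) {C : Set Q} (hC : M.IsSCC C) (i : ℕ) :
    ∃ n, C ∩ M.sideSet C (M.win w i) ⊆
      (M.sideAut C).layer w C (fun i => M.sideSet C (M.win w i)) n i :=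
  (side_winning hweak w C).bound (M.sideAut_scc hweak hC).1 (M.sideAut_scc hweak hC).2 i

/-- The tracked set `D` has strictly decreasing maximal rank, so that it becomes empty. -/
lemma exists_empty {w : ℕ → α} {S D : ℕ → Set Q}
    (hS : ∀ i, M.IsSCC (S i))
    (hstep : ∀ i, TrackStep M next (w i) (M.win w (i + 1)) (winPre M w (i + 1))
      (S i, D i) (S (i + 1), D (i + 1))) {C : Set Q} (m : ℕ) :
    ∀ i, S i = C →
      D i ⊆ (M.sideAut C).layer w C (fun j => M.sideSet C (M.win w j)) m i →
      ∃ e, i ≤ e ∧ D e = ∅ := by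
  induction m with
  | zero => exact fun i _ h => ⟨i, le_rfl, Set.subset_empty_iff.1 h⟩
  | succ m ih =>
    intro i hi h
    by_cases hd : D i = ∅
    · exact ⟨i, le_rfl, hd⟩
    have hC : M.IsSCC C := hi ▸ hS i
    have ht := (hstep i).2 hd
    simp only [hi] at ht
    have hdown : DownClosed (winPre M w (i + 1) C) (C ∩ M.sideSet C (M.win w (i + 1)))
        ((M.sideAut C).layer w C (fun j => M.sideSet C (M.win w j)) m (i + 1)) := by
      refine ⟨layer_subset _ _, fun q hq q' hq' => ?_⟩
      rw [winPre, if_pos hC] at hq'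
      exact hq'.2.2 m hq
    obtain ⟨e, he, hde⟩ := ih (i + 1) ht.1 (ht.2.2 _ hdown fun s hs => (h hs).2)
    exact ⟨e, by omega, hde⟩

lemma subset_lang_bu (hweak : M.IsWeak) (hC0 : M.IsSCC C0)
    (hnext : ∀ C, M.IsSCC C → M.IsSCC (next C)) : M.lang ⊆ (Bu M next C0).lang := by
  intro w hw
  rw [mem_lang_iff hweak] at hw
  have htot : ∀ i C, M.IsSCC C →
      IsTotalPreorderOn (C ∩ M.sideSet C (M.win w i)) (winPre M w i C) := by
    intro i C hC
    rw [winPre, if_pos hC]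
    exact rankLe_total (P := fun j => M.sideSet C (M.win w j))
  obtain ⟨b, hb0, hb, hstep⟩ := exists_seq (x₀ := (C0, (∅ : Set Q)))
    (p := fun i x => M.IsSCC x.1 ∧
      DownClosed (winPre M w i x.1) (x.1 ∩ M.sideSet x.1 (M.win w i)) x.2)
    (r := fun i x x' => TrackStep M next (w i) (M.win w (i + 1)) (winPre M w (i + 1)) x x')
    ⟨hC0, Set.empty_subset _, fun _ h => h.elim⟩ (by
      rintro i ⟨S, D⟩ ⟨hS, hD⟩
      by_cases hd : D = ∅
      · exact ⟨(next S, next S ∩ M.sideSet (next S) (M.win w (i + 1))),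
          ⟨hnext S hS, subset_rfl, fun q _ q' hq' => ((htot _ _ (hnext S hS)).1 _ _ hq').1⟩,
          fun _ => ⟨rfl, rfl⟩, fun h => absurd hd h⟩
      · obtain ⟨D', h1, h2, h3⟩ := (htot (i + 1) S hS).exists_least
          (f := fun D' => ∀ s ∈ D, Sat (D' ∪ (M.sideSet S (M.win w (i + 1)) \ S))
            ((M.sideAut S).delta s (w i))) (by
            intro s hs
            rw [inter_union_diff]
            exact (side_winning hweak w S).sat i s (hD.1 hs).2)
        exact ⟨(S, D'), ⟨hS, h1⟩, fun h => absurd h hd, fun _ => ⟨rfl, h2, h3⟩⟩)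
  let ρ : ℕ → BuState Q := fun i =>
    (M.win w i, (M.win w i)ᶜ, winPre M w i, (b i).1, (b i).2)
  have wf : ∀ i, BuWF M (ρ i) := fun i => (buWF_iff hweak _).2
    ⟨rfl, htot i, fun C hC => by
      change winPre M w i C = _
      rw [winPre, if_neg hC], (hb i).1, (hb i).2⟩
  refine ⟨ρ, ⟨⟨wf 0, hw, congrArg Prod.fst hb0, congrArg Prod.snd hb0⟩, fun i => ?_⟩, fun n => ?_⟩
  · refine (mem_bu_delta_iff hweak _ _ _ _ _).2
      ⟨wf i, wf (i + 1), (M.win_winning w).sat i, ?_, fun C hC => ?_, hstep i⟩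
    · change ∀ s ∈ (M.win w i)ᶜ, Sat (M.win w (i + 1))ᶜ _
      rw [← dual_win hweak, ← dual_win hweak]
      exact (M.dual.win_winning w).sat i
    · change RuleR1 _ _ _ _ _ (winPre M w i C) (winPre M w (i + 1) C)
      rw [winPre, winPre, if_pos hC, if_pos hC]
      exact rankLe_rule (P := fun j => M.sideSet C (M.win w j))
        ((side_winning hweak w C).sat i) (side_bound hweak w hC _)
  · obtain ⟨m, hm⟩ := side_bound hweak w (hb n).1 n
    obtain ⟨e, he, hde⟩ := exists_empty (S := fun i => (b i).1) (D := fun i => (b i).2)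
      (fun i => (hb i).1) hstep m n rfl ((hb n).2.1.trans hm)
    exact ⟨e, he, wf e, hde⟩

end construct

/-! ### Correctness and unambiguity -/

/-- correctness and unambiguity of the `B_u` construction. -/
theorem bu_correct {α Q : Type} [Fintype α] [Fintype Q] (M : ABA α Q)
    (hweak : M.IsWeak) (hcomp : M.Complete)
    (next : Set Q → Set Q) (C0 : Set Q) (hC0 : M.IsSCC C0)
    (hnext : ∀ C, M.IsSCC C → M.IsSCC (next C))
    (hcyc : ∀ C C', M.IsSCC C → M.IsSCC C' → ∃ k : ℕ, next^[k] C = C') :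
    (Bu M next C0).lang = M.lang ∧ (Bu M next C0).Unambiguous := by
  exact ⟨(lang_bu_subset hweak hnext hcyc).antisymm (subset_lang_bu hweak hC0 hnext),
    bu_unambiguous hweak hnext hcyc⟩
end

section
/- Let A be an AWA and let U be the NBA constructed from A that tracks a single total preorder for one SCC at a time (the U construction). Then (1) L(U) = L(A), and (2) U is unambiguous, i.e., U has at most one accepting macrorun over every ω-word. -/
universe u v

/-!
Fix a word `w`. Call a family `W i` of state sets *good* if `W (i + 1)` satisfies the transition
formulas of `W i` and, for every rejecting component `C`, every state of `W i ∩ C` has a finite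
*distance*: the number of levels within which all branches inside `W` can be forced out of `C`
(`Bd`). Going to successors of smaller distance turns a good family into accepting run DAGs
(`good_accepts`), and by induction along the components a good family for `M` is disjoint from a
good family for the dual of `M` (`good_disjoint`). Hence there is at most one family that is good
and whose complement is good for the dual (`det_unique`). It exists: it is `QSeq M w`
(`qseq_det`). Distances are finite there because the states of infinite distance would carry a
branch staying in `C`; and a state, or a set of states of an accepting component, whose
complementary conditions fail could be added to the family without losing goodness.

In an accepting macrorun of `Uaut`, the first components form such a family (`run_det`), since each
component is entered and emptied again and again; this gives one inclusion of the languages. For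
the rest, look at one phase, for a component `C`, ending at level `k`. There the preorder is
trivial, and the rule determines the preorder at each level from the next one: at level `j` it must
compare distances truncated at `k - j + 1` (`rule_core`, `run_back`). The last component starts as
the whole domain and can shrink only by one distance per level, so the phase lasts exactly as long
as the largest distance at its start (`run_back`, `run_forward`), and at level `j` the last
component is the set of states of distance at most `k - j` (`step_canon`). So the macrorun is
determined by its first components (`run_eq_can`), which gives unambiguity, and conversely this
description defines an accepting macrorun from `QSeq M w` (`can_acc`).

Rejecting and accepting components are treated together by passing to the dual automaton and the
complementary family for the latter (`sideM`, `sideQ`).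
-/

namespace UProof

open PosBool

variable {α Q : Type}

/-! ### Positive Boolean formulas -/

lemma sat_mono {Y Z : Set Q} (h : Y ⊆ Z) : ∀ {θ : PosBool Q}, Sat Y θ → Sat Z θ
  | .tt, _ => trivial
  | .ff, h' => h'.elim
  | .var _, h' => h h'
  | .band _ _, h' => ⟨sat_mono h h'.1, sat_mono h h'.2⟩
  | .bor _ _, h' => h'.imp (sat_mono h) (sat_mono h)

lemma sat_dual (Y : Set Q) (θ : PosBool Q) : Sat Y θ.dual ↔ ¬ Sat Yᶜ θ := by
  induction θ with
  | tt => simp [PosBool.dual, Sat]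
  | ff => simp [PosBool.dual, Sat]
  | var q => simp [PosBool.dual, Sat]
  | band a b iha ihb => simp only [PosBool.dual, Sat, iha, ihb]; tauto
  | bor a b iha ihb => simp only [PosBool.dual, Sat, iha, ihb]; tauto

lemma vars_dual (θ : PosBool Q) : vars θ.dual = vars θ := by
  induction θ with
  | tt => rfl
  | ff => rfl
  | var q => rfl
  | band a b iha ihb => simp only [PosBool.dual, vars, iha, ihb]
  | bor a b iha ihb => simp only [PosBool.dual, vars, iha, ihb]

lemma sat_vars {Y : Set Q} {θ : PosBool Q} (h : Sat Y θ) : Sat (Y ∩ vars θ) θ := by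
  induction θ with
  | tt => trivial
  | ff => exact h
  | var q => exact ⟨h, rfl⟩
  | band a b iha ihb =>
    exact ⟨sat_mono (Set.inter_subset_inter_right _ Set.subset_union_left) (iha h.1),
      sat_mono (Set.inter_subset_inter_right _ Set.subset_union_right) (ihb h.2)⟩
  | bor a b iha ihb =>
    rcases h with h | h
    · exact Or.inl (sat_mono (Set.inter_subset_inter_right _ Set.subset_union_left) (iha h))
    · exact Or.inr (sat_mono (Set.inter_subset_inter_right _ Set.subset_union_right) (ihb h))

lemma sat_meet {Y Z : Set Q} {θ : PosBool Q} (hY : Sat Y θ) (hZ : Sat Z θ.dual) :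
    ∃ x, x ∈ Y ∧ x ∈ Z ∧ x ∈ vars θ := by
  by_contra hne
  push Not at hne
  refine (sat_dual Z θ).1 hZ (sat_mono ?_ (sat_vars hY))
  rintro x ⟨hx, hv⟩ hz
  exact hne x hx hz hv

/-! ### Strongly connected components and duality -/

lemma dual_edge (M : ABA α Q) : M.dual.edge = M.edge := by
  funext q q'
  simp only [ABA.edge, ABA.dual, vars_dual]

lemma dual_sccOf (M : ABA α Q) : M.dual.sccOf = M.sccOf := by
  funext q
  simp only [ABA.sccOf, ABA.reach, dual_edge]

lemma dual_isSCC (M : ABA α Q) (C : Set Q) : M.dual.IsSCC C ↔ M.IsSCC C := by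
  simp only [ABA.IsSCC, dual_sccOf]

lemma dual_rejPart (M : ABA α Q) : M.dual.RejPart = M.AccPart := by
  ext q
  simp only [ABA.RejPart, ABA.AccPart, dual_sccOf, Set.mem_ofPred_eq]
  simp only [ABA.dual, ← Set.disjoint_iff_inter_eq_empty, Set.disjoint_compl_right_iff_subset]

lemma dual_isWeak {M : ABA α Q} (h : M.IsWeak) : M.dual.IsWeak := by
  intro q
  rw [dual_sccOf]
  rcases h q with h | h
  · right
    rwa [← Set.disjoint_iff_inter_eq_empty, ABA.dual, Set.disjoint_compl_right_iff_subset]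
  · left
    rwa [← Set.disjoint_iff_inter_eq_empty, ← Set.subset_compl_iff_disjoint_right] at h

lemma self_mem_scc (M : ABA α Q) (q : Q) : q ∈ M.sccOf q :=
  ⟨Relation.ReflTransGen.refl, Relation.ReflTransGen.refl⟩

lemma sccOf_eq {M : ABA α Q} {p q : Q} (h : q ∈ M.sccOf p) : M.sccOf q = M.sccOf p := by
  ext x
  exact ⟨fun hx => ⟨h.1.trans hx.1, hx.2.trans h.2⟩, fun hx => ⟨h.2.trans hx.1, hx.2.trans h.1⟩⟩

lemma eq_sccOf {M : ABA α Q} {C : Set Q} (hC : M.IsSCC C) {p : Q} (hp : p ∈ C) :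
    M.sccOf p = C := by
  obtain ⟨q, rfl⟩ := hC
  exact sccOf_eq hp

lemma scc_cases {M : ABA α Q} (hw : M.IsWeak) {C : Set Q} (hC : M.IsSCC C) :
    C ⊆ M.RejPart ∨ C ⊆ M.AccPart := by
  obtain ⟨q, rfl⟩ := hC
  rcases hw q with h | h
  · right
    intro p hp
    simpa only [ABA.AccPart, Set.mem_ofPred_eq, sccOf_eq hp] using h
  · left
    intro p hp
    simpa only [ABA.RejPart, Set.mem_ofPred_eq, sccOf_eq hp] using h

lemma not_rej_acc {M : ABA α Q} {q : Q} (hr : q ∈ M.RejPart) (ha : q ∈ M.AccPart) : False := by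
  have h : q ∈ M.sccOf q ∩ M.acc := ⟨self_mem_scc M q, ha (self_mem_scc M q)⟩
  rw [hr] at h
  exact h

lemma not_rej_of_acc {M : ABA α Q} {C : Set Q} (hC : M.IsSCC C) (ha : C ⊆ M.AccPart) :
    ¬ C ⊆ M.RejPart := by
  obtain ⟨q, rfl⟩ := hC
  exact fun hr => not_rej_acc (hr (self_mem_scc M q)) (ha (self_mem_scc M q))

/-- Moving to a strictly later component is well founded, as there are finitely many states. -/
lemma wf_below [Finite Q] (M : ABA α Q) :
    WellFounded (fun q p : Q => M.reach p q ∧ ¬ M.reach q p) := by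
  have : IsTrans Q (fun q p : Q => M.reach p q ∧ ¬ M.reach q p) :=
    ⟨fun a b c hab hbc => ⟨hbc.1.trans hab.1, fun h => hab.2 (h.trans hbc.1)⟩⟩
  have : Std.Irrefl (fun q p : Q => M.reach p q ∧ ¬ M.reach q p) := ⟨fun a h => h.2 h.1⟩
  exact Finite.wellFounded_of_trans_of_irrefl _

/-! ### Ranks and ranked families -/

/-- `Bd N w W C n i` is the set of states of `C` at level `i` of the family `W` from which, inside
`W`, all branches can be made to leave `C` within `n` steps; thus the least `n` with
`p ∈ Bd N w W C n i` is the distance of `p`. -/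
def Bd (N : ABA α Q) (w : ℕ → α) (W : ℕ → Set Q) (C : Set Q) : ℕ → ℕ → Set Q
  | 0, _ => ∅
  | n + 1, i =>
    {p | p ∈ W i ∩ C ∧ Sat (Bd N w W C n (i + 1) ∪ (W (i + 1) \ C)) (N.delta p (w i))}

/-- A family `W` is closed if each `W (i + 1)` satisfies the transition formulas of all states
of `W i`. -/
def Closed (N : ABA α Q) (w : ℕ → α) (W : ℕ → Set Q) : Prop :=
  ∀ i, ∀ p ∈ W i, Sat (W (i + 1)) (N.delta p (w i))

/-- A closed family in which every state of a rejecting component has a finite distance. -/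
def Good (N : ABA α Q) (w : ℕ → α) (W : ℕ → Set Q) : Prop :=
  Closed N w W ∧ ∀ C, N.IsSCC C → C ⊆ N.RejPart → ∀ i, ∀ p ∈ W i ∩ C, ∃ n, p ∈ Bd N w W C n i

section Rank

variable {N : ABA α Q} {w : ℕ → α} {W W' : ℕ → Set Q} {C : Set Q}

lemma Bd_sub (n i : ℕ) : Bd N w W C n i ⊆ W i ∩ C := by
  cases n with
  | zero => exact Set.empty_subset _
  | succ n => exact fun p hp => hp.1

lemma Bd_succ (n i : ℕ) : Bd N w W C n i ⊆ Bd N w W C (n + 1) i := by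
  induction n generalizing i with
  | zero => exact Set.empty_subset _
  | succ n ih =>
    exact fun p hp => ⟨hp.1, sat_mono (Set.union_subset_union_left _ (ih (i + 1))) hp.2⟩

lemma Bd_mono {m n : ℕ} (h : m ≤ n) (i : ℕ) : Bd N w W C m i ⊆ Bd N w W C n i :=
  monotone_nat_of_le_succ (f := fun n => Bd N w W C n i) (fun n => Bd_succ n i) h

lemma Bd_mono_fam (h : ∀ i, W i ⊆ W' i) (n i : ℕ) : Bd N w W C n i ⊆ Bd N w W' C n i := by
  induction n generalizing i with
  | zero => exact Set.empty_subset _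
  | succ n ih =>
    exact fun p hp => ⟨⟨h i hp.1.1, hp.1.2⟩,
      sat_mono (Set.union_subset_union (ih (i + 1)) (Set.sdiff_subset_sdiff_left (h (i + 1)))) hp.2⟩

lemma unif [Finite Q] {S : Set Q} {i : ℕ} (h : ∀ p ∈ S, ∃ n, p ∈ Bd N w W C n i) :
    ∃ n, S ⊆ Bd N w W C n i := by
  have := Fintype.ofFinite Q
  have h' : ∀ p, ∃ n, p ∈ S → p ∈ Bd N w W C n i := by
    intro p
    by_cases hp : p ∈ S
    · exact (h p hp).imp fun n hn _ => hn
    · exact ⟨0, fun h => (hp h).elim⟩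
  choose f hf using h'
  exact ⟨Finset.univ.sup f, fun p hp => Bd_mono (Finset.le_sup (Finset.mem_univ p)) i (hf p hp)⟩

lemma rank_back (hc : Closed N w W) {n i : ℕ} (h : W (i + 1) ∩ C ⊆ Bd N w W C n (i + 1)) :
    W i ∩ C ⊆ Bd N w W C (n + 1) i := by
  refine fun p hp => ⟨hp, sat_mono ?_ (hc i p hp.1)⟩
  intro q hq
  by_cases hqC : q ∈ C
  · exact Or.inl (h ⟨hq, hqC⟩)
  · exact Or.inr ⟨hq, hqC⟩

end Rank

/-! ### Ranked families are accepted, and exclude dual ranked families -/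

/-- The run DAG on a ranked family in which distances decrease along edges inside a rejecting
component is accepting. -/
lemma good_accepts [Finite Q] {M : ABA α Q} (hw : M.IsWeak) {w : ℕ → α} {W : ℕ → Set Q}
    (hg : Good M w W) (i : ℕ) : W i ⊆ QSeq M w i := by
  intro p hp
  let G : (M.setInit p).RunDAG (suffix w i) :=
    { V := fun l => W (i + l)
      E := fun l q q' => q ∈ W (i + l) ∧ q' ∈ W (i + l + 1) ∧ M.edge q q' ∧
        ∀ n, M.sccOf q ⊆ M.RejPart → q ∈ Bd M w W (M.sccOf q) (n + 1) (i + l) →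
          q' ∈ Bd M w W (M.sccOf q) n (i + l + 1) ∪ (W (i + l + 1) \ M.sccOf q)
      init_mem := hp
      edge_src := fun l q q' h => h.1
      edge_tgt := fun l q q' h => h.2.1
      sat := by
        intro l q hq
        change Sat _ (M.delta q (w (i + l)))
        by_cases hR : M.sccOf q ⊆ M.RejPart
        · classical
          obtain ⟨n, hn⟩ := hg.2 _ ⟨q, rfl⟩ hR (i + l) q ⟨hq, self_mem_scc M q⟩
          -- the least admissible distance serves all larger ones by monotonicity
          have hex : ∃ n, q ∈ Bd M w W (M.sccOf q) (n + 1) (i + l) := ⟨n, Bd_succ n _ hn⟩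
          have hs := Nat.find_spec hex
          refine sat_mono ?_ (sat_vars hs.2)
          rintro x ⟨hx, hxv⟩
          refine ⟨hq, ?_, ⟨_, hxv⟩, fun m _ hm => ?_⟩
          · rcases hx with hx | hx
            · exact (Bd_sub _ _ hx).1
            · exact hx.1
          · exact Set.union_subset_union_left _ (Bd_mono (Nat.find_min' hex hm) _) hx
        · refine sat_mono ?_ (sat_vars (hg.1 (i + l) q hq))
          rintro x ⟨hx, hxv⟩
          exact ⟨hq, hx, ⟨_, hxv⟩, fun m h => (hR h).elim⟩ }
  refine ⟨G, fun b hb => ?_⟩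
  have key : ∀ q l, b l = q → ∃ m, l ≤ m ∧ b m ∈ M.acc := by
    intro q
    induction q using (wf_below M).induction with
    | _ q ih =>
      intro l hl
      by_cases hacc : q ∈ M.acc
      · exact ⟨l, le_rfl, hl ▸ hacc⟩
      have hR : M.sccOf q ⊆ M.RejPart := by
        rcases scc_cases hw ⟨q, rfl⟩ with h | h
        · exact h
        · exact (hacc (h (self_mem_scc M q) (self_mem_scc M q))).elim
      have inner : ∀ n l, b l ∈ Bd M w W (M.sccOf q) n (i + l) → ∃ m, l ≤ m ∧ b m ∈ M.acc := by
        intro n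
        induction n with
        | zero => exact fun l h => h.elim
        | succ n ihn =>
          intro l h
          have hC := (Bd_sub _ _ h).2
          have hE := hb.2 l
          have hstep := hE.2.2.2 n
          rw [sccOf_eq hC] at hstep
          rcases hstep hR h with h' | h'
          · obtain ⟨m, hm, hma⟩ := ihn (l + 1) h'
            exact ⟨m, by omega, hma⟩
          · have hr : M.reach q (b (l + 1)) := hC.1.tail hE.2.2.1
            obtain ⟨m, hm, hma⟩ := ih (b (l + 1)) ⟨hr, fun h2 => h'.2 ⟨hr, h2⟩⟩ (l + 1) rfl
            exact ⟨m, by omega, hma⟩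
      have hbl : b l ∈ W (i + l) := (hb.2 l).1
      obtain ⟨n, hn⟩ := hg.2 _ ⟨q, rfl⟩ hR (i + l) (b l) ⟨hbl, hl ▸ self_mem_scc M q⟩
      exact inner n l hn
  exact fun n => key _ n rfl

/-- A ranked state of a component meets a state of a family closed for a dual automaton only if
some state of a strictly later component does. -/
lemma meet_descend {M N : ABA α Q} {w : ℕ → α} {W₁ W₂ : ℕ → Set Q} {q : Q}
    (hMN : ∀ (x : Q) a Y Z, Sat Y (M.delta x a) → Sat Z (N.delta x a) →
      ∃ y, y ∈ Y ∧ y ∈ Z ∧ M.edge x y)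
    (h2 : Closed N w W₂)
    (ih : ∀ y, M.reach q y ∧ ¬ M.reach y q → ∀ i, y ∈ W₁ i → y ∈ W₂ i → False) :
    ∀ n i x, x ∈ Bd M w W₁ (M.sccOf q) n i → x ∈ W₂ i → False := by
  intro n
  induction n with
  | zero => exact fun i x h _ => h
  | succ n ihn =>
    intro i x hx hx2
    obtain ⟨y, hy, hy2, he⟩ := hMN x _ _ _ hx.2 (h2 i x hx2)
    rcases hy with hy | hy
    · exact ihn _ y hy hy2
    · have hr : M.reach q y := hx.1.2.1.tail he
      exact ih y ⟨hr, fun h => hy.2 ⟨hr, h⟩⟩ _ hy.1 hy2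

lemma good_disjoint [Finite Q] {M : ABA α Q} (hw : M.IsWeak) {w : ℕ → α} {W₁ W₂ : ℕ → Set Q}
    (h1 : Good M w W₁) (h2 : Good M.dual w W₂) : ∀ q i, q ∈ W₁ i → q ∈ W₂ i → False := by
  intro q
  induction q using (wf_below M).induction with
  | _ q ih =>
    intro i hq1 hq2
    have hscc : M.IsSCC (M.sccOf q) := ⟨q, rfl⟩
    rcases scc_cases hw hscc with hR | hA
    · obtain ⟨n, hn⟩ := h1.2 _ hscc hR i q ⟨hq1, self_mem_scc M q⟩
      refine meet_descend (N := M.dual) ?_ h2.1 ih n i q hn hq2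
      intro x a Y Z hY hZ
      obtain ⟨y, hy, hz, hv⟩ := sat_meet hY hZ
      exact ⟨y, hy, hz, a, hv⟩
    · obtain ⟨n, hn⟩ := h2.2 _ ((dual_isSCC M _).2 hscc) (by rwa [dual_rejPart]) i q
        ⟨hq2, self_mem_scc M q⟩
      rw [← dual_sccOf] at hn
      refine meet_descend (N := M) ?_ h1.1 ?_ n i q hn hq1
      · intro x a Y Z hY hZ
        obtain ⟨y, hy, hz, hv⟩ := sat_meet hZ hY
        exact ⟨y, hz, hy, by rw [dual_edge]; exact ⟨a, hv⟩⟩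
      · intro y hy i hy2 hy1
        rw [ABA.reach, dual_edge] at hy
        exact ih y hy i hy1 hy2

/-- A ranked family and its complement being ranked for the dual automaton: such a family splits
the states at each level into those accepting and those rejecting the remaining word. -/
def Det (M : ABA α Q) (w : ℕ → α) (W : ℕ → Set Q) : Prop :=
  Good M w W ∧ Good M.dual w (fun i => (W i)ᶜ)

lemma det_unique [Finite Q] {M : ABA α Q} (hw : M.IsWeak) {w : ℕ → α} {W₁ W₂ : ℕ → Set Q}
    (h1 : Det M w W₁) (h2 : Det M w W₂) : W₁ = W₂ := by
  funext i
  ext q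
  constructor
  · intro h
    by_contra hn
    exact good_disjoint hw h1.1 h2.2 q i h hn
  · intro h
    by_contra hn
    exact good_disjoint hw h2.1 h1.2 q i h hn

/-! ### The family of accepting states -/

/-- All paths of the run DAG `G` issuing from the vertex `(q, l)` visit accepting states
infinitely often. -/
def AccFrom {M : ABA α Q} {w : ℕ → α} (G : M.RunDAG w) (l : ℕ) (q : Q) : Prop :=
  q ∈ G.V l ∧ ∀ c : ℕ → Q, c 0 = q → (∀ k, G.E (l + k) (c k) (c (k + 1))) →
    ∀ n, ∃ m, n ≤ m ∧ c m ∈ M.acc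

lemma AccFrom.next {M : ABA α Q} {w : ℕ → α} {G : M.RunDAG w} {l : ℕ} {q q' : Q}
    (h : AccFrom G l q) (he : G.E l q q') : AccFrom G (l + 1) q' := by
  refine ⟨G.edge_tgt _ _ _ he, fun c hc hE n => ?_⟩
  obtain ⟨m, hm, hma⟩ := h.2 (fun k => Nat.casesOn k q c) rfl (by
    intro k
    cases k with
    | zero => simpa [hc] using he
    | succ k => simpa [Nat.add_assoc, Nat.add_comm 1] using hE k) (n + 1)
  cases m with
  | zero => omega
  | succ m => exact ⟨m, by omega, hma⟩

lemma AccFrom.mem {M : ABA α Q} {w : ℕ → α} {i : ℕ} {p : Q}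
    {G : (M.setInit p).RunDAG (suffix w i)} {l : ℕ} {q : Q} (h : AccFrom G l q) :
    q ∈ QSeq M w (i + l) := by
  refine ⟨{ V := fun k => G.V (l + k)
            E := fun k => G.E (l + k)
            init_mem := h.1
            edge_src := fun k => G.edge_src (l + k)
            edge_tgt := fun k => G.edge_tgt (l + k)
            sat := fun k x hx => ?_ }, fun b hb => h.2 b hb.1 hb.2⟩
  have := G.sat (l + k) x hx
  simpa only [ABA.setInit, suffix, Nat.add_assoc] using this

lemma mem_QSeq {M : ABA α Q} {w : ℕ → α} {i : ℕ} {p : Q} (h : p ∈ QSeq M w i) :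
    ∃ G : (M.setInit p).RunDAG (suffix w i), AccFrom G 0 p := by
  obtain ⟨G, hG⟩ := h
  refine ⟨G, G.init_mem, fun c hc hE => hG c ⟨hc, fun l => ?_⟩⟩
  simpa using hE l

lemma qseq_good [Finite Q] (M : ABA α Q) (w : ℕ → α) : Good M w (QSeq M w) := by
  constructor
  · intro i p hp
    obtain ⟨G, hG⟩ := mem_QSeq hp
    refine sat_mono ?_ (G.sat 0 p hG.1)
    exact fun q hq => (hG.next hq).mem
  · intro C hC hR i p hp
    obtain ⟨G, hG⟩ := mem_QSeq hp.1
    by_contra hno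
    -- a state of infinite distance has a successor of infinite distance in the same component
    let T : ℕ → Q → Prop := fun l q =>
      AccFrom G l q ∧ q ∈ C ∧ ¬ ∃ n, q ∈ Bd M w (QSeq M w) C n (i + l)
    have hstep : ∀ l q, T l q → ∃ q', G.E l q q' ∧ T (l + 1) q' := by
      rintro l q ⟨ha, hqC, hq⟩
      by_contra hne
      push Not at hne
      obtain ⟨n, hn⟩ := unif (N := M) (w := w) (W := QSeq M w) (C := C)
        (S := {q' | G.E l q q'} ∩ C) (i := i + l + 1) (by
          rintro x ⟨hx, hxC⟩
          by_contra hxn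
          exact hne x hx ⟨ha.next hx, hxC, hxn⟩)
      refine hq ⟨n + 1, ⟨ha.mem, hqC⟩, sat_mono ?_ (G.sat l q ha.1)⟩
      intro x hx
      by_cases hxC : x ∈ C
      · exact Or.inl (hn ⟨hx, hxC⟩)
      · exact Or.inr ⟨(ha.next hx).mem, hxC⟩
    choose f hf using hstep
    let c : (l : ℕ) → {q // T l q} := fun l =>
      Nat.rec (motive := fun l => {q // T l q}) ⟨p, hG, hp.2, hno⟩
        (fun l x => ⟨f l x.1 x.2, (hf l x.1 x.2).2⟩) l
    obtain ⟨m, -, hm⟩ := hG.2 (fun l => (c l).1) rfl (fun k => by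
      rw [Nat.zero_add]
      exact (hf k (c k).1 (c k).2).1) 0
    have hmC := (c m).2.2.1
    have hbad : (c m).1 ∈ M.sccOf (c m).1 ∩ M.acc := ⟨self_mem_scc _ _, hm⟩
    rw [hR hmC] at hbad
    exact hbad

lemma qseq_det [Finite Q] {M : ABA α Q} (hw : M.IsWeak) (w : ℕ → α) : Det M w (QSeq M w) := by
  have hg := qseq_good M w
  refine ⟨hg, ?_, ?_⟩
  · intro i p hp
    change Sat _ (PosBool.dual _)
    rw [sat_dual, compl_compl]
    intro hs
    -- adding `p` at level `i` alone preserves all distances, and gives `p` a finite one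
    let W' : ℕ → Set Q := fun j => QSeq M w j ∪ {q | j = i ∧ q = p}
    have hsub : ∀ j, QSeq M w j ⊆ W' j := fun j => Set.subset_union_left
    have hg' : Good M w W' := by
      constructor
      · rintro j q (hq | ⟨rfl, rfl⟩)
        · exact sat_mono (hsub _) (hg.1 j q hq)
        · exact sat_mono (hsub _) hs
      · rintro C hC hR j q ⟨hq | ⟨rfl, rfl⟩, hqC⟩
        · obtain ⟨n, hn⟩ := hg.2 C hC hR j q ⟨hq, hqC⟩
          exact ⟨n, Bd_mono_fam hsub n j hn⟩
        · obtain ⟨n, hn⟩ := unif (hg.2 C hC hR (j + 1))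
          refine ⟨n + 1, ⟨Or.inr ⟨rfl, rfl⟩, hqC⟩, sat_mono ?_ hs⟩
          intro x hx
          by_cases hxC : x ∈ C
          · exact Or.inl (Bd_mono_fam hsub n _ (hn ⟨hx, hxC⟩))
          · exact Or.inr ⟨hsub _ hx, hxC⟩
    exact hp (good_accepts hw hg' i (Or.inr ⟨rfl, rfl⟩))
  · intro C hC hA i p hp
    rw [dual_rejPart] at hA
    by_contra hno
    -- the states of infinite dual distance can be kept inside the accepting component `C`
    let V : ℕ → Set Q := fun i => (QSeq M w i)ᶜ
    let X : ℕ → Set Q := fun j => {q | q ∈ V j ∩ C ∧ ¬ ∃ n, q ∈ Bd M.dual w V C n j}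
    let W' : ℕ → Set Q := fun j => QSeq M w j ∪ X j
    have hsub : ∀ j, QSeq M w j ⊆ W' j := fun j => Set.subset_union_left
    have hg' : Good M w W' := by
      constructor
      · rintro j q (hq | ⟨hq, hqn⟩)
        · exact sat_mono (hsub _) (hg.1 j q hq)
        · by_contra hns
          obtain ⟨n, hn⟩ := unif (N := M.dual) (w := w) (W := V) (C := C)
            (S := (V (j + 1) ∩ C) \ X (j + 1)) (i := j + 1) (by
              rintro x ⟨hx, hxX⟩
              by_contra hxn
              exact hxX ⟨hx, hxn⟩)
          refine hqn ⟨n + 1, hq, ?_⟩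
          have hd : Sat (W' (j + 1))ᶜ (M.dual.delta q (w j)) := by
            change Sat _ (PosBool.dual _)
            rwa [sat_dual, compl_compl]
          refine sat_mono ?_ hd
          intro x hx
          have hxV : x ∈ V (j + 1) := fun h => hx (Or.inl h)
          by_cases hxC : x ∈ C
          · exact Or.inl (hn ⟨⟨hxV, hxC⟩, fun h => hx (Or.inr h)⟩)
          · exact Or.inr ⟨hxV, hxC⟩
      · rintro C' hC' hR j q ⟨hq | ⟨hq, -⟩, hqC⟩
        · obtain ⟨n, hn⟩ := hg.2 C' hC' hR j q ⟨hq, hqC⟩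
          exact ⟨n, Bd_mono_fam hsub n j hn⟩
        · exact (not_rej_acc (hR hqC) (hA hq.2)).elim
    exact hp.1 (good_accepts hw hg' i (Or.inr ⟨hp, hno⟩))

/-! ### Truncated distance preorders -/

section Preorder

variable {N : ABA α Q} {w : ℕ → α} {W : ℕ → Set Q} {C : Set Q}

lemma nat_last (P : ℕ → Prop) {m t : ℕ} (hmt : m ≤ t) (hP : P m) :
    ∃ g, m ≤ g ∧ g ≤ t ∧ P g ∧ ∀ n ≤ t, P n → n ≤ g := by
  classical
  exact ⟨Nat.findGreatest P t, Nat.le_findGreatest hmt hP, Nat.findGreatest_le t,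
    Nat.findGreatest_spec hmt hP, fun n hn h => Nat.le_findGreatest hn h⟩

/-- The preorder on `W i ∩ C` comparing distances truncated at `t + 1`. -/
def LeT (N : ABA α Q) (w : ℕ → α) (W : ℕ → Set Q) (C : Set Q) (t i : ℕ) (p q : Q) : Prop :=
  p ∈ W i ∩ C ∧ q ∈ W i ∩ C ∧ ∀ n ≤ t, q ∈ Bd N w W C n i → p ∈ Bd N w W C n i

lemma strict_LeT {t i : ℕ} {p q : Q} : StrictOf (LeT N w W C t i) p q ↔
    p ∈ W i ∩ C ∧ q ∈ W i ∩ C ∧ ∃ n ≤ t, p ∈ Bd N w W C n i ∧ q ∉ Bd N w W C n i := by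
  constructor
  · rintro ⟨⟨hp, hq, -⟩, h⟩
    refine ⟨hp, hq, ?_⟩
    by_contra hne
    push Not at hne
    exact h ⟨hq, hp, hne⟩
  · rintro ⟨hp, hq, n, hn, hpn, hqn⟩
    refine ⟨⟨hp, hq, fun m hm hqm => ?_⟩, fun h => hqn (h.2.2 n hn hpn)⟩
    rcases le_total m n with h | h
    · exact (hqn (Bd_mono h i hqm)).elim
    · exact Bd_mono h i hpn

lemma total_LeT (t i : ℕ) : IsTotalPreorderOn (W i ∩ C) (LeT N w W C t i) := by
  refine ⟨fun p q h => ⟨h.1, h.2.1⟩, fun p hp => ⟨hp, hp, fun _ _ h => h⟩,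
    fun p q r h1 h2 => ⟨h1.1, h2.2.1, fun n hn h => h1.2.2 n hn (h2.2.2 n hn h)⟩, ?_⟩
  intro p hp q hq
  by_contra hne
  push Not at hne
  have hs : StrictOf (LeT N w W C t i) p q := by
    refine strict_LeT.2 ⟨hp, hq, ?_⟩
    by_contra h
    push Not at h
    exact hne.2 ⟨hq, hp, h⟩
  exact hne.1 hs.1

lemma total_iff {D : Set Q} {le : Q → Q → Prop} (h : IsTotalPreorderOn D le) (p q : Q) :
    le p q ↔ p ∈ D ∧ q ∈ D ∧ ¬ StrictOf le q p := by
  constructor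
  · exact fun hpq => ⟨(h.1 p q hpq).1, (h.1 p q hpq).2, fun hs => hs.2 hpq⟩
  · rintro ⟨hp, hq, hs⟩
    by_contra hpq
    exact hs ⟨(h.2.2.2 p hp q hq).resolve_left hpq, hpq⟩

lemma total_ext {D : Set Q} {le le' : Q → Q → Prop} (h : IsTotalPreorderOn D le)
    (h' : IsTotalPreorderOn D le')
    (hs : ∀ p ∈ D, ∀ q ∈ D, (StrictOf le p q ↔ StrictOf le' p q)) : le = le' := by
  funext p q
  rw [eq_iff_iff, total_iff h, total_iff h']
  constructor
  · rintro ⟨hp, hq, hn⟩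
    exact ⟨hp, hq, fun hh => hn ((hs q hq p hp).2 hh)⟩
  · rintro ⟨hp, hq, hn⟩
    exact ⟨hp, hq, fun hh => hn ((hs q hq p hp).1 hh)⟩

/-- If `g` is one less than the truncated distance of `r`, the states strictly below `r` are those
of distance at most `g`. -/
lemma below_eq {t i g : ℕ} {r : Q} (hr : r ∈ W i ∩ C) (hg : g ≤ t) (hrg : r ∉ Bd N w W C g i)
    (hmax : ∀ n ≤ t, r ∉ Bd N w W C n i → n ≤ g) :
    {r' | r' ∈ C ∩ W i ∧ StrictOf (LeT N w W C t i) r' r} = Bd N w W C g i := by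
  ext x
  constructor
  · rintro ⟨-, hs⟩
    obtain ⟨-, -, n, hn, hx, hrn⟩ := strict_LeT.1 hs
    exact Bd_mono (hmax n hn hrn) i hx
  · intro hx
    have := Bd_sub _ _ hx
    exact ⟨⟨this.2, this.1⟩, strict_LeT.2 ⟨this, hr, g, hg, hx, hrg⟩⟩

/-- The right-hand side of the rule, read against a truncated distance preorder at level `i + 1`,
compares distances at level `i` with one more step of precision. The full set `W (i + 1) ∩ C`
is never the set of states strictly below some `r`, but it also never separates two states. -/
lemma rule_core (hc : Closed N w W) {t i : ℕ} {q q' : Q} (hq : q ∈ W i ∩ C) (hq' : q' ∈ W i ∩ C) :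
    (∃ r ∈ C ∩ W (i + 1),
      Sat ({r' | r' ∈ C ∩ W (i + 1) ∧ StrictOf (LeT N w W C t (i + 1)) r' r} ∪ (W (i + 1) \ C))
        (N.delta q (w i)) ∧
      ¬ Sat ({r' | r' ∈ C ∩ W (i + 1) ∧ StrictOf (LeT N w W C t (i + 1)) r' r} ∪ (W (i + 1) \ C))
        (N.delta q' (w i))) ↔
    ∃ n ≤ t + 1, q ∈ Bd N w W C n i ∧ q' ∉ Bd N w W C n i := by
  constructor
  · rintro ⟨r, hr, hs, hns⟩
    obtain ⟨g, -, hg, hrg, hmax⟩ := nat_last (fun n => r ∉ Bd N w W C n (i + 1)) (Nat.zero_le t)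
      (fun h => h)
    rw [below_eq ⟨hr.2, hr.1⟩ hg hrg hmax] at hs hns
    exact ⟨g + 1, by omega, ⟨hq, hs⟩, fun h => hns h.2⟩
  · rintro ⟨n, hn, hqn, hqn'⟩
    cases n with
    | zero => exact hqn.elim
    | succ m =>
      -- the largest separating cut is realised as the set strictly below some `r`
      obtain ⟨g, hmg, hgt, hg, hmax⟩ := nat_last (fun n => q' ∉ Bd N w W C (n + 1) i)
        (show m ≤ t by omega) hqn'
      have hqg : q ∈ Bd N w W C (g + 1) i := Bd_mono (by omega) i hqn
      have hr : ∃ r ∈ W (i + 1) ∩ C, r ∉ Bd N w W C g (i + 1) ∧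
          ∀ n ≤ t, r ∉ Bd N w W C n (i + 1) → n ≤ g := by
        by_cases hgt' : g = t
        · by_contra hne
          push Not at hne
          refine hg (rank_back hc (fun x hx => ?_) hq')
          by_contra hxn
          obtain ⟨n, h1, -, h2⟩ := hne x hx hxn
          omega
        · have hq2 : q' ∈ Bd N w W C (g + 1 + 1) i := by
            by_contra h
            have := hmax (g + 1) (by omega) h
            omega
          by_contra hne
          push Not at hne
          refine hg ⟨hq', sat_mono (Set.union_subset_union_left _ (fun x hx => ?_)) hq2.2⟩
          by_contra hxn
          obtain ⟨n, h1, h2, h3⟩ := hne x (Bd_sub _ _ hx) hxn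
          exact h2 (Bd_mono (by omega) _ hx)
      obtain ⟨r, hrW, hrg, hrm⟩ := hr
      refine ⟨r, ⟨hrW.2, hrW.1⟩, ?_⟩
      rw [below_eq hrW hgt hrg hrm]
      exact ⟨hqg.2, fun h => hg ⟨hq', h⟩⟩

lemma rule_LeT (hc : Closed N w W) (t i : ℕ) :
    RuleR1 N C (w i) (W i) (W (i + 1)) (LeT N w W C (t + 1) i) (LeT N w W C t (i + 1)) := by
  intro q hq q' hq'
  rw [rule_core hc ⟨hq.2, hq.1⟩ ⟨hq'.2, hq'.1⟩, strict_LeT]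
  exact ⟨fun h => h.2.2, fun h => ⟨⟨hq.2, hq.1⟩, ⟨hq'.2, hq'.1⟩, h⟩⟩

lemma rule_unique (hc : Closed N w W) {t i : ℕ} {le : Q → Q → Prop}
    (htot : IsTotalPreorderOn (W i ∩ C) le)
    (hr : RuleR1 N C (w i) (W i) (W (i + 1)) le (LeT N w W C t (i + 1))) :
    le = LeT N w W C (t + 1) i := by
  refine total_ext htot (total_LeT _ _) fun p hp q hq => ?_
  rw [hr p ⟨hp.2, hp.1⟩ q ⟨hq.2, hq.1⟩,
    rule_LeT hc t i p ⟨hp.2, hp.1⟩ q ⟨hq.2, hq.1⟩]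

lemma trivial_unique {i : ℕ} {le : Q → Q → Prop} {D : Set Q}
    (htot : IsTotalPreorderOn (W i ∩ C) le)
    (hD : D = W i ∩ C ∨ D = (W i ∩ C) \ MaxSet le (W i ∩ C)) (h0 : D = ∅) :
    le = LeT N w W C 0 i := by
  refine total_ext htot (total_LeT _ _) fun p hp q hq => ?_
  have h2 : ¬ StrictOf (LeT N w W C 0 i) p q := by
    rw [strict_LeT]
    rintro ⟨-, -, n, hn, hpn, -⟩
    obtain rfl : n = 0 := by omega
    exact hpn
  have h1 : ¬ StrictOf le p q := by
    rcases hD with hD | hD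
    · rw [← hD, h0] at hp
      exact hp.elim
    · have hpM : p ∈ MaxSet le (W i ∩ C) := by
        by_contra hpm
        have : p ∈ D := hD ▸ ⟨hp, hpm⟩
        rw [h0] at this
        exact this
      exact hpM.2 q hq
  exact iff_of_false h1 h2

/-- Some state at level `i` has distance exactly `t` (or `t = 0`). -/
def Exact (N : ABA α Q) (w : ℕ → α) (W : ℕ → Set Q) (C : Set Q) (t i : ℕ) : Prop :=
  ∀ n, Bd N w W C t i ⊆ Bd N w W C n i → t ≤ n

/-- The conditions on a transition within a phase for the component `C`. -/
def StepOK (N : ABA α Q) (C : Set Q) (σ : α) (X X' : Set Q) (le le' : Q → Q → Prop)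
    (D D' : Set Q) : Prop :=
  RuleR1 N C σ X X' le le' ∧ DownClosed le' (X' ∩ C) D' ∧
    (∀ s ∈ D, Sat (D' ∪ (X' \ C)) (N.delta s σ)) ∧
    ∀ D'', DownClosed le' (X' ∩ C) D'' → (∀ s ∈ D, Sat (D'' ∪ (X' \ C)) (N.delta s σ)) → D' ⊆ D''

lemma downClosed_Bd {n t i : ℕ} (h : n ≤ t) :
    DownClosed (LeT N w W C t i) (W i ∩ C) (Bd N w W C n i) :=
  ⟨Bd_sub n i, fun _ hq _ hle => hle.2.2 n h hq⟩

lemma Exact.succ {t i : ℕ} (h : Exact N w W C (t + 1) i) : Exact N w W C t (i + 1) := by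
  intro n hn
  have : t + 1 ≤ n + 1 :=
    h (n + 1) fun p hp => ⟨hp.1, sat_mono (Set.union_subset_union_left _ hn) hp.2⟩
  omega

/-- If the last component consists of the states of distance at most `t + 1` and this distance is
attained, then the states of distance at most `t` form its only possible successor. -/
lemma step_canon (hc : Closed N w W) {t i : ℕ} (h : Exact N w W C (t + 1) i) :
    StepOK N C (w i) (W i) (W (i + 1)) (LeT N w W C (t + 1) i) (LeT N w W C t (i + 1))
      (Bd N w W C (t + 1) i) (Bd N w W C t (i + 1)) := by
  refine ⟨rule_LeT hc t i, downClosed_Bd le_rfl, fun s hs => hs.2, fun D hD hs x hx => ?_⟩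
  cases t with
  | zero => exact hx.elim
  | succ t =>
    by_contra hxD
    -- a downwards closed set missing a state of distance at most `t + 1` has distances at most `t`
    have hsub : D ⊆ Bd N w W C t (i + 1) := by
      intro y hy
      by_contra hyn
      refine hxD (hD.2 y hy x ⟨Bd_sub _ _ hx, hD.1 hy, fun n hn hyn' => ?_⟩)
      rcases Nat.lt_or_ge t n with htn | htn
      · exact Bd_mono htn _ hx
      · exact (hyn (Bd_mono htn _ hyn')).elim
    have : t + 1 + 1 ≤ t + 1 := h (t + 1) fun p hp =>
      ⟨hp.1, sat_mono (Set.union_subset_union_left _ hsub) (hs p hp)⟩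
    omega

lemma step_unique {σ : α} {X X' D D₁ D₂ : Set Q} {le₁ le₂ le' : Q → Q → Prop}
    (h1 : StepOK N C σ X X' le₁ le' D D₁) (h2 : StepOK N C σ X X' le₂ le' D D₂) : D₁ = D₂ :=
  Set.Subset.antisymm (h1.2.2.2 _ h2.2.1 h2.2.2.1) (h2.2.2.2 _ h1.2.1 h1.2.2.1)

lemma shape_Bd (t i : ℕ) : Bd N w W C t i = W i ∩ C ∨
    Bd N w W C t i = (W i ∩ C) \ MaxSet (LeT N w W C t i) (W i ∩ C) := by
  by_cases h : W i ∩ C ⊆ Bd N w W C t i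
  · exact Or.inl (Set.Subset.antisymm (Bd_sub _ _) h)
  · right
    obtain ⟨r, hr, hrt⟩ := Set.not_subset.1 h
    ext p
    constructor
    · intro hp
      exact ⟨Bd_sub _ _ hp, fun hm =>
        hm.2 r hr (strict_LeT.2 ⟨Bd_sub _ _ hp, hr, t, le_rfl, hp, hrt⟩)⟩
    · rintro ⟨hp, hm⟩
      by_contra hpt
      refine hm ⟨hp, fun q _ hs => ?_⟩
      obtain ⟨-, -, n, hn, hpn, -⟩ := strict_LeT.1 hs
      exact hpt (Bd_mono hn _ hpn)

lemma Exact.nonempty {t i : ℕ} (h : Exact N w W C t i) (h0 : Bd N w W C t i = ∅) : t = 0 :=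
  Nat.le_zero.1 (h 0 (by rw [h0]; exact Set.empty_subset _))

end Preorder

/-! ### Rejecting and accepting components treated alike -/

section Side

open Classical in
/-- The automaton whose rejecting component `C` is: the automaton itself if `C` is rejecting,
its dual if `C` is accepting. -/
noncomputable def sideM (M : ABA α Q) (C : Set Q) : ABA α Q :=
  if C ⊆ M.RejPart then M else M.dual

open Classical in
/-- The part of a macrostate tracked for the component `C`. -/
noncomputable def sideQ (M : ABA α Q) (C X : Set Q) : Set Q :=
  if C ⊆ M.RejPart then X else Xᶜ

lemma ruleR2_iff (M : ABA α Q) (C : Set Q) (σ : α) (X X' : Set Q) (le le' : Q → Q → Prop) :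
    RuleR2 M C σ X X' le le' ↔ RuleR1 M.dual C σ Xᶜ X'ᶜ le le' := by
  simp only [RuleR2, RuleR1, Set.compl_union, Set.sdiff_eq]

variable {M : ABA α Q}

lemma uwf_iff (hw : M.IsWeak) (m : UState Q) : UWF M m ↔ m.q2 = m.q1ᶜ ∧ M.IsSCC m.cC ∧
    IsTotalPreorderOn (sideQ M m.cC m.q1 ∩ m.cC) m.pre ∧
    (m.dD = sideQ M m.cC m.q1 ∩ m.cC ∨
      m.dD = (sideQ M m.cC m.q1 ∩ m.cC) \ MaxSet m.pre (sideQ M m.cC m.q1 ∩ m.cC)) := by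
  unfold UWF
  refine and_congr_right fun h2 => and_congr_right fun hC => ?_
  rw [h2]
  rcases scc_cases hw hC with h | h
  · have h' : ¬ m.cC ⊆ M.AccPart := fun ha => not_rej_of_acc hC ha h
    simp [sideQ, h, h']
  · have h' := not_rej_of_acc hC h
    simp [sideQ, h, h']

lemma delta_iff (hw : M.IsWeak) (next : Set Q → Set Q) (C0 : Set Q) (m m' : UState Q) (σ : α) :
    m' ∈ (Uaut M next C0).delta m σ ↔ UWF M m ∧ UWF M m' ∧
      (∀ s ∈ m.q1, Sat m'.q1 (M.delta s σ)) ∧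
      (∀ s ∈ m.q2, Sat m'.q2 (M.dual.delta s σ)) ∧
      (m.dD = ∅ → m'.cC = next m.cC ∧ m'.dD = sideQ M m'.cC m'.q1 ∩ m'.cC) ∧
      (m.dD ≠ ∅ → m'.cC = m.cC ∧ StepOK (sideM M m.cC) m.cC σ (sideQ M m.cC m.q1)
        (sideQ M m.cC m'.q1) m.pre m'.pre m.dD m'.dD) := by
  change UWF M m ∧ UWF M m' ∧ _ ↔ _
  refine and_congr_right fun h => and_congr_right fun h' => and_congr_right fun _ =>
    and_congr_right fun _ => and_congr ?_ ?_
  · refine imp_congr_right fun _ => and_congr_right fun _ => ?_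
    rw [h'.1]
    rcases scc_cases hw h'.2.1 with hh | hh
    · have hn : ¬ m'.cC ⊆ M.AccPart := fun ha => not_rej_of_acc h'.2.1 ha hh
      simp [sideQ, hh, hn]
    · have hn := not_rej_of_acc h'.2.1 hh
      simp [sideQ, hh, hn]
  · refine imp_congr_right fun _ => and_congr_right fun _ => ?_
    rw [h'.1]
    rcases scc_cases hw h.2.1 with hh | hh
    · have hn : ¬ m.cC ⊆ M.AccPart := fun ha => not_rej_of_acc h.2.1 ha hh
      simp only [sideQ, sideM, hh, hn, StepOK, if_true, true_imp_iff, false_imp_iff, and_true]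
    · have hn := not_rej_of_acc h.2.1 hh
      simp only [sideQ, sideM, hh, hn, StepOK, if_false, true_imp_iff, false_imp_iff, true_and,
        ruleR2_iff]

/-- The family tracked for the component `C`. -/
noncomputable def sideW (M : ABA α Q) (C : Set Q) (W : ℕ → Set Q) : ℕ → Set Q :=
  fun i => sideQ M C (W i)

/-- Distances in the component `C`, for whichever of the automaton and its dual rejects there. -/
noncomputable def SB (M : ABA α Q) (w : ℕ → α) (W : ℕ → Set Q) (C : Set Q) : ℕ → ℕ → Set Q :=
  Bd (sideM M C) w (sideW M C W) C

/-- The truncated distance preorder in the component `C`. -/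
noncomputable def SLe (M : ABA α Q) (w : ℕ → α) (W : ℕ → Set Q) (C : Set Q) :
    ℕ → ℕ → Q → Q → Prop :=
  LeT (sideM M C) w (sideW M C W) C

lemma side_rej {C : Set Q} (h : C ⊆ M.RejPart) (W : ℕ → Set Q) :
    sideM M C = M ∧ sideW M C W = W := by
  refine ⟨if_pos h, ?_⟩
  funext i
  exact if_pos h

lemma side_acc {C : Set Q} (h : ¬ C ⊆ M.RejPart) (W : ℕ → Set Q) :
    sideM M C = M.dual ∧ sideW M C W = fun i => (W i)ᶜ := by
  refine ⟨if_neg h, ?_⟩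
  funext i
  exact if_neg h

lemma side_closed {w : ℕ → α} {W : ℕ → Set Q} (h1 : Closed M w W)
    (h2 : Closed M.dual w (fun i => (W i)ᶜ)) (C : Set Q) :
    Closed (sideM M C) w (sideW M C W) := by
  by_cases h : C ⊆ M.RejPart
  · rwa [(side_rej h W).1, (side_rej h W).2]
  · rwa [(side_acc h W).1, (side_acc h W).2]

lemma det_iff (hw : M.IsWeak) [Finite Q] {w : ℕ → α} {W : ℕ → Set Q} : Det M w W ↔
    Closed M w W ∧ Closed M.dual w (fun i => (W i)ᶜ) ∧
    ∀ C, M.IsSCC C → ∀ i, ∃ n, sideW M C W i ∩ C ⊆ SB M w W C n i := by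
  constructor
  · rintro ⟨h1, h2⟩
    refine ⟨h1.1, h2.1, fun C hC i => ?_⟩
    rcases scc_cases hw hC with h | h
    · rw [SB, (side_rej h W).1, (side_rej h W).2]
      exact unif (h1.2 C hC h i)
    · have hn := not_rej_of_acc hC h
      rw [SB, (side_acc hn W).1, (side_acc hn W).2]
      exact unif (h2.2 C ((dual_isSCC M C).2 hC) (by rwa [dual_rejPart]) i)
  · rintro ⟨h1, h2, h3⟩
    refine ⟨⟨h1, fun C hC h i p hp => ?_⟩, ⟨h2, fun C hC h i p hp => ?_⟩⟩
    · obtain ⟨n, hn⟩ := h3 C hC i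
      rw [SB, (side_rej h W).1, (side_rej h W).2] at hn
      exact ⟨n, hn hp⟩
    · rw [dual_isSCC] at hC
      rw [dual_rejPart] at h
      have hr := not_rej_of_acc hC h
      obtain ⟨n, hn⟩ := h3 C hC i
      rw [SB, (side_acc hr W).1, (side_acc hr W).2] at hn
      exact ⟨n, hn hp⟩

end Side

/-! ### Accepting macroruns -/

section Run

variable {M : ABA α Q} {next : Set Q → Set Q} {C0 : Set Q} {w : ℕ → α} {ρ : ℕ → UState Q}

/-- The first components of a sequence of macrostates. -/
def fam (ρ : ℕ → UState Q) : ℕ → Set Q := fun i => (ρ i).q1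

/-- The first level `≥ s` at which the macrorun has an empty last component is `s + d`. -/
def Window (ρ : ℕ → UState Q) (s d : ℕ) : Prop :=
  (ρ (s + d)).dD = ∅ ∧ ∀ j < d, (ρ (s + j)).dD ≠ ∅

lemma Window.succ {s d : ℕ} (h : Window ρ s (d + 1)) : Window ρ (s + 1) d := by
  refine ⟨?_, fun j hj => ?_⟩
  · have := h.1
    rwa [show s + (d + 1) = s + 1 + d by omega] at this
  · have := h.2 (j + 1) (by omega)
    rwa [show s + (j + 1) = s + 1 + j by omega] at this

lemma exists_window (hacc : (Uaut M next C0).IsAccMacrorun w ρ) (s : ℕ) : ∃ d, Window ρ s d := by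
  classical
  have hex : ∃ d, (ρ (s + d)).dD = ∅ := by
    obtain ⟨m, hm, hma⟩ := hacc.2 s
    exact ⟨m - s, by rw [show s + (m - s) = m by omega]; exact hma.2⟩
  exact ⟨Nat.find hex, Nat.find_spec hex, fun j hj => Nat.find_min hex hj⟩

lemma run_wf (hrun : (Uaut M next C0).IsMacrorun w ρ)
    (i : ℕ) : UWF M (ρ i) := (hrun.2 i).1

lemma run_closed (hw : M.IsWeak) (hrun : (Uaut M next C0).IsMacrorun w ρ) :
    Closed M w (fam ρ) := fun i =>
  ((delta_iff hw next C0 _ _ _).1 (hrun.2 i)).2.2.1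

lemma run_closed_dual (hw : M.IsWeak) (hrun : (Uaut M next C0).IsMacrorun w ρ) :
    Closed M.dual w (fun i => (fam ρ i)ᶜ) := by
  intro i
  have h := ((delta_iff hw next C0 _ _ _).1 (hrun.2 i)).2.2.2.1
  rw [(run_wf hrun i).1, (run_wf hrun (i + 1)).1] at h
  exact h

lemma run_side_closed (hw : M.IsWeak) (hrun : (Uaut M next C0).IsMacrorun w ρ)
    (C : Set Q) : Closed (sideM M C) w (sideW M C (fam ρ)) :=
  side_closed (run_closed hw hrun) (run_closed_dual hw hrun) C

lemma run_start (hw : M.IsWeak) (hrun : (Uaut M next C0).IsMacrorun w ρ)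
    {i : ℕ} (h : (ρ i).dD = ∅) : (ρ (i + 1)).cC = next (ρ i).cC ∧
    (ρ (i + 1)).dD = sideW M (ρ (i + 1)).cC (fam ρ) (i + 1) ∩ (ρ (i + 1)).cC :=
  ((delta_iff hw next C0 _ _ _).1 (hrun.2 i)).2.2.2.2.1 h

lemma run_step (hw : M.IsWeak) (hrun : (Uaut M next C0).IsMacrorun w ρ)
    {i : ℕ} (h : (ρ i).dD ≠ ∅) : (ρ (i + 1)).cC = (ρ i).cC ∧
    StepOK (sideM M (ρ i).cC) (ρ i).cC (w i) (sideW M (ρ i).cC (fam ρ) i)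
      (sideW M (ρ i).cC (fam ρ) (i + 1)) (ρ i).pre (ρ (i + 1)).pre (ρ i).dD (ρ (i + 1)).dD :=
  ((delta_iff hw next C0 _ _ _).1 (hrun.2 i)).2.2.2.2.2 h

/-- Working backwards from the end of a phase, where the preorder is trivial, the preorder at
`d` levels before the end is the distance preorder truncated at `d + 1`. -/
lemma run_back (hw : M.IsWeak) (hrun : (Uaut M next C0).IsMacrorun w ρ) :
    ∀ d s, Window ρ s d → (ρ s).pre = SLe M w (fam ρ) (ρ s).cC d s ∧
    (ρ s).dD ⊆ SB M w (fam ρ) (ρ s).cC d s ∧ (ρ (s + d)).cC = (ρ s).cC := by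
  intro d
  induction d with
  | zero =>
    intro s h
    have hwf := (uwf_iff hw _).1 (run_wf hrun s)
    have h0 : (ρ s).dD = ∅ := h.1
    refine ⟨trivial_unique hwf.2.2.1 hwf.2.2.2 h0, ?_, rfl⟩
    rw [h0]
    exact Set.empty_subset _
  | succ d ih =>
    intro s h
    have hwf := (uwf_iff hw _).1 (run_wf hrun s)
    have hwf' := (uwf_iff hw _).1 (run_wf hrun (s + 1))
    obtain ⟨i1, i2, i3⟩ := ih (s + 1) h.succ
    obtain ⟨hC, hr, hdc, hs, -⟩ := run_step hw hrun (i := s) (h.2 0 (by omega))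
    rw [hC] at i1 i2 i3
    rw [i1] at hr
    refine ⟨rule_unique (run_side_closed hw hrun _) hwf.2.2.1 hr, fun p hp => ⟨?_, ?_⟩, ?_⟩
    · rcases hwf.2.2.2 with h' | h'
      · exact h'.subset hp
      · exact (h'.subset hp).1
    · exact sat_mono (Set.union_subset_union_left _ i2) (hs p hp)
    · rw [← i3, show s + (d + 1) = s + 1 + d by omega]

/-- A phase ends as soon as all its states have had time to leave the component. -/
lemma run_forward (hw : M.IsWeak) (hrun : (Uaut M next C0).IsMacrorun w ρ) :
    ∀ n s d, Window ρ s d → (ρ s).dD ⊆ SB M w (fam ρ) (ρ s).cC n s → d ≤ n := by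
  intro n
  induction n with
  | zero =>
    intro s d h hD
    by_contra hd
    exact h.2 0 (by omega) (Set.subset_empty_iff.1 hD)
  | succ n ih =>
    intro s d h hD
    cases d with
    | zero => omega
    | succ d =>
      by_contra hlt
      obtain ⟨hC, -, -, -, hleast⟩ := run_step hw hrun (i := s) (h.2 0 (by omega))
      obtain ⟨i1, -, -⟩ := run_back hw hrun d (s + 1) h.succ
      have : d ≤ n := by
        refine ih (s + 1) d h.succ ?_
        rw [hC] at i1 ⊢
        rw [i1] at hleast
        exact hleast _ (downClosed_Bd (by omega)) fun p hp => (hD hp).2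
      omega

lemma run_visits (hw : M.IsWeak) (hacc : (Uaut M next C0).IsAccMacrorun w ρ) {C : Set Q} :
    ∀ k b, (ρ b).dD = ∅ → next^[k] (next (ρ b).cC) = C →
      ∃ s, b < s ∧ (ρ s).cC = C ∧ (ρ s).dD = sideW M C (fam ρ) s ∩ C := by
  intro k
  induction k with
  | zero =>
    intro b hb hC
    obtain ⟨h1, h2⟩ := run_start hw hacc.1 hb
    have h3 : (ρ (b + 1)).cC = C := h1.trans hC
    rw [h3] at h2
    exact ⟨b + 1, by omega, h3, h2⟩
  | succ k ih =>
    intro b hb hC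
    obtain ⟨h1, -⟩ := run_start hw hacc.1 hb
    obtain ⟨d, hd⟩ := exists_window hacc (b + 1)
    obtain ⟨-, -, h3⟩ := run_back hw hacc.1 d (b + 1) hd
    obtain ⟨s, hs, hs'⟩ := ih (b + 1 + d) hd.1 (by rw [h3, h1, ← hC]; rfl)
    exact ⟨s, by omega, hs'⟩

/-- In an accepting macrorun every component is emptied again and again, so all distances are
finite. -/
lemma run_det [Finite Q] (hw : M.IsWeak) (hnext : ∀ C, M.IsSCC C → M.IsSCC (next C))
    (hcyc : ∀ C C', M.IsSCC C → M.IsSCC C' → ∃ k : ℕ, next^[k] C = C')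
    (hacc : (Uaut M next C0).IsAccMacrorun w ρ) : Det M w (fam ρ) := by
  refine (det_iff hw).2 ⟨run_closed hw hacc.1, run_closed_dual hw hacc.1, fun C hC i => ?_⟩
  obtain ⟨b, hb, hba⟩ := hacc.2 i
  obtain ⟨k, hk⟩ := hcyc (next (ρ b).cC) C (hnext _ hba.1.2.1) hC
  obtain ⟨s, hs, hsC, hsD⟩ := run_visits hw hacc k b hba.2 hk
  obtain ⟨d, hd⟩ := exists_window hacc s
  obtain ⟨-, h2, -⟩ := run_back hw hacc.1 d s hd
  rw [hsC, hsD] at h2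
  have hback : ∀ j, ∀ i, i + j = s → ∃ n, sideW M C (fam ρ) i ∩ C ⊆ SB M w (fam ρ) C n i := by
    intro j
    induction j with
    | zero =>
      rintro i rfl
      exact ⟨d, h2⟩
    | succ j ih =>
      intro i hi
      obtain ⟨n, hn⟩ := ih (i + 1) (by omega)
      exact ⟨n + 1, rank_back (run_side_closed hw hacc.1 C) hn⟩
  exact hback (s - i) i (by omega)

/-! ### The canonical macrorun -/

/-- The current component and the number of levels remaining in the current phase: a phase for
`C` starting at level `i` lasts for the largest distance occurring in `C` at level `i`. -/
noncomputable def ctl (M : ABA α Q) (next : Set Q → Set Q) (C0 : Set Q) (w : ℕ → α)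
    (W : ℕ → Set Q) : ℕ → Set Q × ℕ
  | 0 => (C0, 0)
  | i + 1 =>
    if (ctl M next C0 w W i).2 = 0 then
      (next (ctl M next C0 w W i).1,
        sInf {n | sideW M (next (ctl M next C0 w W i).1) W (i + 1) ∩ next (ctl M next C0 w W i).1 ⊆
          SB M w W (next (ctl M next C0 w W i).1) n (i + 1)})
    else ((ctl M next C0 w W i).1, (ctl M next C0 w W i).2 - 1)

/-- The macrorun determined by the family `W`. -/
noncomputable def can (M : ABA α Q) (next : Set Q → Set Q) (C0 : Set Q) (w : ℕ → α)
    (W : ℕ → Set Q) (i : ℕ) : UState Q :=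
  (W i, (W i)ᶜ, SLe M w W (ctl M next C0 w W i).1 (ctl M next C0 w W i).2 i,
    (ctl M next C0 w W i).1,
    SB M w W (ctl M next C0 w W i).1 (ctl M next C0 w W i).2 i)

variable {W : ℕ → Set Q}

lemma ctl_zero {i : ℕ} (h : (ctl M next C0 w W i).2 = 0) :
    ctl M next C0 w W (i + 1) = (next (ctl M next C0 w W i).1,
        sInf {n | sideW M (next (ctl M next C0 w W i).1) W (i + 1) ∩ next (ctl M next C0 w W i).1 ⊆
          SB M w W (next (ctl M next C0 w W i).1) n (i + 1)}) := by
  rw [ctl, if_pos h]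

lemma ctl_succ {i t : ℕ} (h : (ctl M next C0 w W i).2 = t + 1) :
    ctl M next C0 w W (i + 1) = ((ctl M next C0 w W i).1, t) := by
  rw [ctl, if_neg (by omega), h, Nat.add_sub_cancel]

/-- With all distances finite, a phase starts with the full domain. -/
lemma sInf_spec [Finite Q] (hw : M.IsWeak) (hdet : Det M w W) {C : Set Q} (hC : M.IsSCC C)
    (i : ℕ) :
    SB M w W C (sInf {n | sideW M C W i ∩ C ⊆ SB M w W C n i}) i = sideW M C W i ∩ C :=
  Set.Subset.antisymm (Bd_sub _ _) (Nat.sInf_mem (((det_iff hw).1 hdet).2.2 C hC i))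

lemma ctl_spec [Finite Q] (hw : M.IsWeak) (hdet : Det M w W) (hC0 : M.IsSCC C0)
    (hnext : ∀ C, M.IsSCC C → M.IsSCC (next C)) (i : ℕ) :
    M.IsSCC (ctl M next C0 w W i).1 ∧ Exact (sideM M (ctl M next C0 w W i).1) w
      (sideW M (ctl M next C0 w W i).1 W) (ctl M next C0 w W i).1 (ctl M next C0 w W i).2 i := by
  induction i with
  | zero => exact ⟨hC0, fun n _ => Nat.zero_le n⟩
  | succ i ih =>
    obtain ⟨t, ht⟩ : ∃ t, (ctl M next C0 w W i).2 = t := ⟨_, rfl⟩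
    cases t with
    | zero =>
      rw [ctl_zero ht]
      have hC := hnext _ ih.1
      refine ⟨hC, fun n hn => Nat.sInf_le ?_⟩
      have := sInf_spec hw hdet hC (i + 1)
      exact this.symm.subset.trans hn
    | succ t =>
      rw [ctl_succ ht]
      rw [ht] at ih
      exact ⟨ih.1, ih.2.succ⟩

lemma can_acc [Finite Q] (hw : M.IsWeak) (hdet : Det M w W) (hC0 : M.IsSCC C0)
    (hnext : ∀ C, M.IsSCC C → M.IsSCC (next C)) (hinit : M.init ∈ W 0) :
    (Uaut M next C0).IsAccMacrorun w (can M next C0 w W) := by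
  have hspec := ctl_spec (next := next) hw hdet hC0 hnext
  have hcl := ((det_iff hw).1 hdet)
  have hwf : ∀ i, UWF M (can M next C0 w W i) := fun i =>
    (uwf_iff hw _).2 ⟨rfl, (hspec i).1, total_LeT _ _, shape_Bd _ _⟩
  refine ⟨⟨⟨hwf 0, hinit, rfl, rfl⟩, fun i => ?_⟩, fun n => ?_⟩
  · refine (delta_iff hw _ _ _ _ _).2 ⟨hwf i, hwf (i + 1), hcl.1 i, hcl.2.1 i, fun h => ?_,
      fun h => ?_⟩
    · have ht := (hspec i).2.nonempty h
      have hC := hnext _ (hspec i).1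
      have h1 := ctl_zero ht
      refine ⟨congrArg Prod.fst h1, ?_⟩
      change SB M w W (ctl M next C0 w W (i + 1)).1 (ctl M next C0 w W (i + 1)).2 (i + 1) =
        sideW M (ctl M next C0 w W (i + 1)).1 W (i + 1) ∩ (ctl M next C0 w W (i + 1)).1
      rw [h1]
      exact sInf_spec hw hdet hC (i + 1)
    · obtain ⟨t, ht⟩ : ∃ t, (ctl M next C0 w W i).2 = t := ⟨_, rfl⟩
      cases t with
      | zero =>
        refine (h ?_).elim
        change SB M w W _ (ctl M next C0 w W i).2 i = ∅
        rw [ht]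
        rfl
      | succ t =>
        have h1 := ctl_succ ht
        have h1' := congrArg Prod.fst h1
        refine ⟨h1', ?_⟩
        have hex := (hspec i).2
        rw [ht] at hex
        have hst := step_canon (side_closed hcl.1 hcl.2.1 _) hex
        simp only [can, UState.cC, UState.q1, UState.pre, UState.dD, h1, ht]
        exact hst
  · have hreach : ∀ t n, (ctl M next C0 w W n).2 = t → ∃ m, n ≤ m ∧ (ctl M next C0 w W m).2 = 0 := by
      intro t
      induction t with
      | zero => exact fun n hn => ⟨n, le_rfl, hn⟩
      | succ t ih =>
        intro n hn
        obtain ⟨m, hm, hm0⟩ := ih (n + 1) (by rw [ctl_succ hn])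
        exact ⟨m, by omega, hm0⟩
    obtain ⟨m, hm, hm0⟩ := hreach _ n rfl
    refine ⟨m, hm, hwf m, ?_⟩
    change SB M w W _ (ctl M next C0 w W m).2 m = ∅
    rw [hm0]
    rfl

lemma run_eq_can [Finite Q] (hw : M.IsWeak) (hC0 : M.IsSCC C0)
    (hnext : ∀ C, M.IsSCC C → M.IsSCC (next C)) (hdet : Det M w (fam ρ))
    (hacc : (Uaut M next C0).IsAccMacrorun w ρ) : ρ = can M next C0 w (fam ρ) := by
  have hspec := ctl_spec (next := next) hw hdet hC0 hnext
  have hinv : ∀ i, (ρ i).cC = (ctl M next C0 w (fam ρ) i).1 ∧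
      (ρ i).dD = SB M w (fam ρ) (ctl M next C0 w (fam ρ) i).1 (ctl M next C0 w (fam ρ) i).2 i ∧
      Window ρ i (ctl M next C0 w (fam ρ) i).2 := by
    intro i
    induction i with
    | zero =>
      obtain ⟨-, -, hC, hD⟩ := hacc.1.1
      exact ⟨hC, hD, hD, fun j hj => absurd hj (Nat.not_lt_zero j)⟩
    | succ i ih =>
      obtain ⟨hC, hD, hwin⟩ := ih
      obtain ⟨t, ht⟩ : ∃ t, (ctl M next C0 w (fam ρ) i).2 = t := ⟨_, rfl⟩
      cases t with
      | zero =>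
        rw [ctl_zero ht]
        rw [ht] at hD
        obtain ⟨h1, h2⟩ := run_start hw hacc.1 hD
        rw [hC] at h1
        have hsp := sInf_spec hw hdet (hnext _ (hspec i).1) (i + 1)
        obtain ⟨d, hd⟩ := exists_window hacc (i + 1)
        obtain ⟨-, hb, -⟩ := run_back hw hacc.1 d (i + 1) hd
        have hf := fun n => run_forward hw hacc.1 n (i + 1) d hd
        rw [h1] at h2 hb hf
        rw [h2] at hb hf
        refine ⟨h1, h2.trans hsp.symm, ?_⟩
        have hle := Nat.sInf_le (s := {n | sideW M (next (ctl M next C0 w (fam ρ) i).1) (fam ρ)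
          (i + 1) ∩ next (ctl M next C0 w (fam ρ) i).1 ⊆
          SB M w (fam ρ) (next (ctl M next C0 w (fam ρ) i).1) n (i + 1)}) hb
        have heq := le_antisymm hle (hf _ hsp.symm.subset)
        rwa [heq]
      | succ t =>
        rw [ctl_succ ht]
        rw [ht] at hwin hD
        have hex := (hspec i).2
        rw [ht] at hex
        obtain ⟨h1, h2⟩ := run_step hw hacc.1 (i := i) (hwin.2 0 (by omega))
        obtain ⟨hp, -, -⟩ := run_back hw hacc.1 t (i + 1) hwin.succ
        rw [hC] at h1 h2
        rw [h1] at hp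
        rw [hp, hD] at h2
        exact ⟨h1, step_unique h2 (step_canon (run_side_closed hw hacc.1 _) hex), hwin.succ⟩
  funext i
  obtain ⟨hC, hD, hwin⟩ := hinv i
  obtain ⟨hp, -, -⟩ := run_back hw hacc.1 _ i hwin
  rw [hC] at hp
  have h2 := (run_wf hacc.1 i).1
  exact Prod.ext rfl (Prod.ext h2 (Prod.ext hp (Prod.ext hC hD)))

end Run

lemma mem_lang_iff (M : ABA α Q) (w : ℕ → α) : w ∈ M.lang ↔ M.init ∈ QSeq M w 0 := by
  have h : suffix w 0 = w := by
    funext n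
    simp [suffix]
  change _ ↔ suffix w 0 ∈ M.lang
  rw [h]

end UProof

/-- correctness and unambiguity of the `U` construction. -/
theorem u_correct {α Q : Type} [Fintype α] [Fintype Q] (M : ABA α Q)
    (hweak : M.IsWeak) (hcomp : M.Complete)
    (next : Set Q → Set Q) (C0 : Set Q) (hC0 : M.IsSCC C0)
    (hnext : ∀ C, M.IsSCC C → M.IsSCC (next C))
    (hcyc : ∀ C C', M.IsSCC C → M.IsSCC C' → ∃ k : ℕ, next^[k] C = C') :
    (Uaut M next C0).lang = M.lang ∧ (Uaut M next C0).Unambiguous := by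
  constructor
  · ext w
    constructor
    · rintro ⟨ρ, hacc⟩
      have hdet := UProof.run_det hweak hnext hcyc hacc
      exact (UProof.mem_lang_iff M w).2 (UProof.good_accepts hweak hdet.1 0 hacc.1.1.2.1)
    · intro h
      exact ⟨_, UProof.can_acc hweak (UProof.qseq_det hweak w) hC0 hnext
        ((UProof.mem_lang_iff M w).1 h)⟩
  · intro w ρ₁ ρ₂ h1 h2
    have d1 := UProof.run_det hweak hnext hcyc h1
    have d2 := UProof.run_det hweak hnext hcyc h2
    rw [UProof.run_eq_can hweak hC0 hnext d1 h1, UProof.run_eq_can hweak hC0 hnext d2 h2,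
      UProof.det_unique hweak d1 d2]
end
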